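/- Appendix Lemma (upper bounds by the relative entropy): Assume ψ̂ ∈ C³(ℝ^{19} × (0,∞)) satisfies the growth conditions, that ∇²_ξ ψ̂(ξ,θ) is positive definite and ∂_θ η̂(ξ,θ) > 0 for all (ξ,θ), and let M, δ > 0. Then there exist constants C₀, C₁, C₂, C₃ > 0 such that for every (ξ,v,θ) ∈ ℝ^{19} × ℝ³ × (0,∞) with ξ = (F,ζ,w) and every (ξ̄,v̄,θ̄) ∈ Γ_{M,δ}: (i) |η̂(ξ,θ|ξ̄,θ̄)| ≤ C₀ I(ξ,v,θ|ξ̄,v̄,θ̄); (ii) for every i, α, |Σ_B ((∂Φ^B/∂F_{iα})(F) − (∂Φ^B/∂F_{iα})(F̄))((∂ψ̂/∂ξ^B)(ξ,θ) − (∂ψ̂/∂ξ^B)(ξ̄,θ̄))| ≤ C₁ I(ξ,v,θ|ξ̄,v̄,θ̄); (iii) |(∂ψ̂/∂ξ)(ξ,θ|ξ̄,θ̄)| ≤ C₂ I(ξ,v,θ|ξ̄,v̄,θ̄); (iv) for every α, |Σ_{B,i} ((∂Φ^B/∂F_{iα})(F) − (∂Φ^B/∂F_{iα})(F̄))(v_i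 − v̄_i)| ≤ C₃ I(ξ,v,θ|ξ̄,v̄,θ̄). -/

import Mathlib

open Real MeasureTheory Filter Set Topology ENNReal NNReal

noncomputable section

abbrev Vec3 := Fin 3 → ℝ
abbrev Mat3 := Fin 3 → Fin 3 → ℝ
abbrev Xi := Mat3 × Mat3 × ℝ
abbrev Idx := (Fin 3 × Fin 3) ⊕ ((Fin 3 × Fin 3) ⊕ Unit)
abbrev FullState := Xi × Vec3 × ℝ

/-- Levi-Civita symbol on three indices. -/
def eps3 (i j k : Fin 3) : ℝ :=
  if (i, j, k) = (0, 1, 2) ∨ (i, j, k) = (1, 2, 0) ∨ (i, j, k) = (2, 0, 1) then 1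
  else if (i, j, k) = (2, 1, 0) ∨ (i, j, k) = (1, 0, 2) ∨ (i, j, k) = (0, 2, 1) then -1
  else 0

/-- Cofactor matrix (cof F)_{iα} = (1/2) ε_{ijk} ε_{αβγ} F_{jβ} F_{kγ}. -/
def cof3 (F : Mat3) : Mat3 := fun i α =>
  (1/2) * ∑ j, ∑ k, ∑ β, ∑ γ, eps3 i j k * eps3 α β γ * F j β * F k γ

/-- det F = (1/6) ε_{ijk} ε_{αβγ} F_{iα} F_{jβ} F_{kγ}. -/
def det3 (F : Mat3) : ℝ :=
  (1/6) * ∑ i, ∑ j, ∑ k, ∑ α, ∑ β, ∑ γ,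
    eps3 i j k * eps3 α β γ * F i α * F j β * F k γ

/-- The vector of null Lagrangians Φ(F) = (F, cof F, det F). -/
def Phi3 (F : Mat3) : Xi := (F, cof3 F, det3 F)

/-- Component ξ^B of ξ ∈ ℝ^19. -/
def xiComp (ξ : Xi) : Idx → ℝ
  | .inl (i, α) => ξ.1 i α
  | .inr (.inl (i, α)) => ξ.2.1 i α
  | .inr (.inr _) => ξ.2.2

def updMat (F : Mat3) (i α : Fin 3) (s : ℝ) : Mat3 :=
  Function.update F i (Function.update (F i) α s)

/-- Update component B of ξ to value s. -/
def xiUpd (ξ : Xi) : Idx → ℝ → Xi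
  | .inl (i, α), s => (updMat ξ.1 i α s, ξ.2)
  | .inr (.inl (i, α)), s => (ξ.1, updMat ξ.2.1 i α s, ξ.2.2)
  | .inr (.inr _), s => (ξ.1, ξ.2.1, s)

/-- ∂Φ^B/∂F_{iα}(F). -/
def dPhi (B : Idx) (i α : Fin 3) (F : Mat3) : ℝ :=
  deriv (fun s => xiComp (Phi3 (updMat F i α s)) B) (F i α)

/-- Partial derivative ∂ψ̂/∂ξ^B of a function ψ̂(ξ, θ). -/
def dXi (B : Idx) (ψ : Xi → ℝ → ℝ) (ξ : Xi) (θ : ℝ) : ℝ :=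
  deriv (fun s => ψ (xiUpd ξ B s) θ) (xiComp ξ B)

/-- Partial derivative ∂ψ̂/∂θ. -/
def dTh (ψ : Xi → ℝ → ℝ) (ξ : Xi) (θ : ℝ) : ℝ :=
  deriv (fun s => ψ ξ s) θ

/-- η̂(ξ,θ) = −∂_θ ψ̂(ξ,θ). -/
def etaHat (ψ : Xi → ℝ → ℝ) (ξ : Xi) (θ : ℝ) : ℝ := -(dTh ψ ξ θ)

/-- ê(ξ,θ) = ψ̂(ξ,θ) − θ ∂_θ ψ̂(ξ,θ). -/
def eHat (ψ : Xi → ℝ → ℝ) (ξ : Xi) (θ : ℝ) : ℝ := ψ ξ θ - θ * dTh ψ ξ θ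

/-- Spatial partial derivative ∂_α of a space-time field. -/
def pdx (α : Fin 3) (f : Vec3 → ℝ → ℝ) (x : Vec3) (t : ℝ) : ℝ :=
  deriv (fun s => f (Function.update x α s) t) (x α)

/-- Time derivative ∂_t of a space-time field. -/
def pdt (f : Vec3 → ℝ → ℝ) (x : Vec3) (t : ℝ) : ℝ :=
  deriv (fun s => f x s) t

def mnorm (F : Mat3) : ℝ := Real.sqrt (∑ i, ∑ j, (F i j)^2)
def vnorm (v : Vec3) : ℝ := Real.sqrt (∑ i, (v i)^2)

/-- |ξ|_{p,q,r} = |F|^p + |ζ|^q + |w|^r. -/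
def xiNorm (p q r : ℝ) (ξ : Xi) : ℝ :=
  mnorm ξ.1 ^ p + mnorm ξ.2.1 ^ q + |ξ.2.2| ^ r

/-- The compact set Γ_{M,δ}. -/
def Gamma (M δ : ℝ) : Set FullState :=
  {U | mnorm U.1.1 ≤ M ∧ mnorm U.1.2.1 ≤ M ∧ |U.1.2.2| ≤ M ∧
       vnorm U.2.1 ≤ M ∧ δ ≤ U.2.2 ∧ U.2.2 ≤ M}

/-- Relative free energy ψ̂(ξ,θ|ξ̄,θ̄). -/
def psiRel (ψ : Xi → ℝ → ℝ) (ξ : Xi) (θ : ℝ) (ξ' : Xi) (θ' : ℝ) : ℝ :=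
  ψ ξ θ - ψ ξ' θ' - (∑ B : Idx, dXi B ψ ξ' θ' * (xiComp ξ B - xiComp ξ' B))
    + etaHat ψ ξ' θ' * (θ - θ')

/-- Relative entropy function η̂(ξ,θ|ξ̄,θ̄). -/
def etaRel (ψ : Xi → ℝ → ℝ) (ξ : Xi) (θ : ℝ) (ξ' : Xi) (θ' : ℝ) : ℝ :=
  etaHat ψ ξ θ - etaHat ψ ξ' θ'
    - (∑ B : Idx, dXi B (etaHat ψ) ξ' θ' * (xiComp ξ B - xiComp ξ' B))
    - dTh (etaHat ψ) ξ' θ' * (θ - θ')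

/-- Relative stress (∂ψ̂/∂ξ^B)(ξ,θ|ξ̄,θ̄). -/
def dXiRel (B : Idx) (ψ : Xi → ℝ → ℝ) (ξ : Xi) (θ : ℝ) (ξ' : Xi) (θ' : ℝ) : ℝ :=
  dXi B ψ ξ θ - dXi B ψ ξ' θ'
    - (∑ A : Idx, dXi A (dXi B ψ) ξ' θ' * (xiComp ξ A - xiComp ξ' A))
    - dTh (dXi B ψ) ξ' θ' * (θ - θ')

/-- Relative entropy I(ξ,v,θ|ξ̄,v̄,θ̄). -/
def relEnt (ψ : Xi → ℝ → ℝ) (ξ : Xi) (v : Vec3) (θ : ℝ)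
    (ξ' : Xi) (v' : Vec3) (θ' : ℝ) : ℝ :=
  psiRel ψ ξ θ ξ' θ' + (1/2) * (∑ i, (v i - v' i)^2)
    + (etaHat ψ ξ θ - etaHat ψ ξ' θ') * (θ - θ')

/-- ψ̂ is C³ on ℝ^19 × (0,∞). -/
def PsiC3 (ψ : Xi → ℝ → ℝ) : Prop :=
  ContDiffOn ℝ 3 (fun p : Xi × ℝ => ψ p.1 p.2) (Set.univ ×ˢ Set.Ioi (0:ℝ))

/-- ∇²_ξ ψ̂ > 0 and ∂_θ η̂ > 0. -/
def PsiConvex (ψ : Xi → ℝ → ℝ) : Prop :=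
  ∀ ξ : Xi, ∀ θ : ℝ, 0 < θ →
    (∀ u : Idx → ℝ, u ≠ 0 →
      0 < ∑ A : Idx, ∑ B : Idx, dXi A (dXi B ψ) ξ θ * u A * u B) ∧
    0 < dTh (etaHat ψ) ξ θ

def gradFnorm (ψ : Xi → ℝ → ℝ) (ξ : Xi) (θ : ℝ) : ℝ :=
  Real.sqrt (∑ i, ∑ α, (dXi (.inl (i, α)) ψ ξ θ)^2)
def gradZnorm (ψ : Xi → ℝ → ℝ) (ξ : Xi) (θ : ℝ) : ℝ :=
  Real.sqrt (∑ i, ∑ α, (dXi (.inr (.inl (i, α))) ψ ξ θ)^2)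
def gradWnorm (ψ : Xi → ℝ → ℝ) (ξ : Xi) (θ : ℝ) : ℝ :=
  |dXi (.inr (.inr ())) ψ ξ θ|

/-- The growth conditions (gr.con.1)-(gr.con.3). -/
def GrowthCond (ψ : Xi → ℝ → ℝ) (c p q r ℓ : ℝ) : Prop :=
  0 < c ∧
  (∀ ξ : Xi, ∀ θ : ℝ, 0 < θ →
    c * (xiNorm p q r ξ + θ ^ ℓ) - c ≤ eHat ψ ξ θ ∧
    eHat ψ ξ θ ≤ c * (xiNorm p q r ξ + θ ^ ℓ) + c) ∧
  (∀ ε : ℝ, 0 < ε → ∃ R : ℝ, ∀ ξ : Xi, ∀ θ : ℝ, 0 < θ →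
    R < xiNorm p q r ξ + θ ^ ℓ →
    gradFnorm ψ ξ θ + gradZnorm ψ ξ θ ^ (p/(p-1)) + gradWnorm ψ ξ θ ^ (p/(p-2))
      ≤ ε * (xiNorm p q r ξ + θ ^ ℓ)) ∧
  (∀ ε : ℝ, 0 < ε → ∃ R : ℝ, ∀ ξ : Xi, ∀ θ : ℝ, 0 < θ →
    R < xiNorm p q r ξ + θ ^ ℓ →
    |dTh ψ ξ θ| ≤ ε * (xiNorm p q r ξ + θ ^ ℓ))

/-- The augmented thermoviscoelasticity system with fields (Z, Q, r), at a point (x,t). -/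
def AugSys (ψ : Xi → ℝ → ℝ) (ξf : Vec3 → ℝ → Xi) (vf : Vec3 → ℝ → Vec3)
    (θf : Vec3 → ℝ → ℝ) (Z : Vec3 → ℝ → Mat3) (Q : Vec3 → ℝ → Vec3)
    (r : Vec3 → ℝ → ℝ) (x : Vec3) (t : ℝ) : Prop :=
  (∀ B : Idx, pdt (fun y s => xiComp (ξf y s) B) x t
      = ∑ α, pdx α (fun y s => ∑ i, dPhi B i α (ξf y s).1 * vf y s i) x t) ∧
  (∀ i, pdt (fun y s => vf y s i) x t
      = ∑ α, pdx α (fun y s =>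
          ∑ B : Idx, dXi B ψ (ξf y s) (θf y s) * dPhi B i α (ξf y s).1) x t
        + ∑ α, pdx α (fun y s => Z y s i α) x t) ∧
  (pdt (fun y s => (1/2) * (∑ i, (vf y s i)^2) + eHat ψ (ξf y s) (θf y s)) x t
      = ∑ α, pdx α (fun y s => ∑ i,
          (∑ B : Idx, dXi B ψ (ξf y s) (θf y s) * dPhi B i α (ξf y s).1) * vf y s i) x t
        + ∑ α, pdx α (fun y s => ∑ i, Z y s i α * vf y s i) x t
        + ∑ α, pdx α (fun y s => Q y s α) x t + r x t) ∧
  (∀ i α β, pdx α (fun y s => (ξf y s).1 i β) x t = pdx β (fun y s => (ξf y s).1 i α) x t)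

/-- The entropy production identity for the augmented system. -/
def EntropyIdent (ψ : Xi → ℝ → ℝ) (ξf : Vec3 → ℝ → Xi) (vf : Vec3 → ℝ → Vec3)
    (θf : Vec3 → ℝ → ℝ) (Z : Vec3 → ℝ → Mat3) (Q : Vec3 → ℝ → Vec3)
    (r : Vec3 → ℝ → ℝ) (x : Vec3) (t : ℝ) : Prop :=
  pdt (fun y s => etaHat ψ (ξf y s) (θf y s)) x t
    - ∑ α, pdx α (fun y s => Q y s α / θf y s) x t
  = (∑ α, pdx α θf x t * Q x t α) / (θf x t)^2
    + (∑ α, ∑ i, pdx α (fun y s => vf y s i) x t * Z x t i α) / θf x t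
    + r x t / θf x t

/-- Newtonian viscous stress Z = μ ∇v. -/
def newtonianZ (μ : Mat3 → ℝ → ℝ) (ξf : Vec3 → ℝ → Xi) (vf : Vec3 → ℝ → Vec3)
    (θf : Vec3 → ℝ → ℝ) : Vec3 → ℝ → Mat3 :=
  fun x t i α => μ (ξf x t).1 (θf x t) * pdx α (fun y s => vf y s i) x t

/-- Fourier heat flux Q = k ∇θ. -/
def fourierQ (k : Mat3 → ℝ → ℝ) (ξf : Vec3 → ℝ → Xi)
    (θf : Vec3 → ℝ → ℝ) : Vec3 → ℝ → Vec3 :=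
  fun x t α => k (ξf x t).1 (θf x t) * pdx α θf x t

/-- The entropy identity for Newtonian viscosity and Fourier heat conduction (zero supply). -/
def EntropyIdentNF (ψ : Xi → ℝ → ℝ) (μ k : Mat3 → ℝ → ℝ) (ξf : Vec3 → ℝ → Xi)
    (vf : Vec3 → ℝ → Vec3) (θf : Vec3 → ℝ → ℝ) (x : Vec3) (t : ℝ) : Prop :=
  pdt (fun y s => etaHat ψ (ξf y s) (θf y s)) x t
    - ∑ α, pdx α (fun y s =>
        k (ξf y s).1 (θf y s) * pdx α θf y s / θf y s) x t
  = k (ξf x t).1 (θf x t) * (∑ α, (pdx α θf x t)^2) / (θf x t)^2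
    + μ (ξf x t).1 (θf x t) *
        (∑ α, ∑ i, (pdx α (fun y s => vf y s i) x t)^2) / θf x t

/-- Fundamental domain of the 3-torus. -/
def Box : Set Vec3 := Set.Icc 0 1

/-- Periodicity in the space variables with period 1. -/
def PeriodicX {E : Type*} (f : Vec3 → ℝ → E) : Prop :=
  ∀ (x : Vec3) (t : ℝ) (α : Fin 3), f (x + Pi.single α 1) t = f x t

/-- C^n regularity of a space-time field. -/
def FieldC {E : Type*} [NormedAddCommGroup E] [NormedSpace ℝ E]
    (n : ℕ) (f : Vec3 → ℝ → E) : Prop :=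
  ContDiff ℝ n (fun p : Vec3 × ℝ => f p.1 p.2)

/-- Spatial integral of the relative entropy at time t. -/
def relEntInt (ψ : Xi → ℝ → ℝ) (ξf : Vec3 → ℝ → Xi) (vf : Vec3 → ℝ → Vec3)
    (θf : Vec3 → ℝ → ℝ) (ξf' : Vec3 → ℝ → Xi) (vf' : Vec3 → ℝ → Vec3)
    (θf' : Vec3 → ℝ → ℝ) (t : ℝ) : ℝ :=
  ∫ x in Box, relEnt ψ (ξf x t) (vf x t) (θf x t) (ξf' x t) (vf' x t) (θf' x t)


/-- Spatial partial derivative of a static field. -/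
def pds (α : Fin 3) (f : Vec3 → ℝ) (x : Vec3) : ℝ :=
  deriv (fun s => f (Function.update x α s)) (x α)

/-- Deformation gradient ∇y of a static map y : ℝ³ → ℝ³. -/
def gradV (y : Vec3 → Vec3) (x : Vec3) : Mat3 :=
  fun i α => pds α (fun z => y z i) x

/-- ∂ψ/∂F_{iα} for ψ = ψ(F,θ). -/
def dFM (i α : Fin 3) (ψ : Mat3 → ℝ → ℝ) (F : Mat3) (θ : ℝ) : ℝ :=
  deriv (fun s => ψ (updMat F i α s) θ) (F i α)

/-- ∂ψ/∂θ for ψ = ψ(F,θ). -/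
def dThM (ψ : Mat3 → ℝ → ℝ) (F : Mat3) (θ : ℝ) : ℝ :=
  deriv (fun s => ψ F s) θ

/-- Index set for the full extended state U = (ξ, v, θ) ∈ ℝ²³. -/
abbrev UIdx := Idx ⊕ (Fin 3 ⊕ Unit)

def uComp (U : FullState) : UIdx → ℝ
  | .inl B => xiComp U.1 B
  | .inr (.inl i) => U.2.1 i
  | .inr (.inr _) => U.2.2

def uUpd (U : FullState) : UIdx → ℝ → FullState
  | .inl B, s => (xiUpd U.1 B s, U.2)
  | .inr (.inl i), s => (U.1, Function.update U.2.1 i s, U.2.2)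
  | .inr (.inr _), s => (U.1, U.2.1, s)

/-- Partial derivative in the state variables (ξ,v,θ). -/
def pdU (B : UIdx) (f : FullState → ℝ) (U : FullState) : ℝ :=
  deriv (fun s => f (uUpd U B s)) (uComp U B)

/-- Second partial derivative in the state variables (ξ,v,θ). -/
def pdU2 (A B : UIdx) (f : FullState → ℝ) (U : FullState) : ℝ :=
  pdU A (fun V => pdU B f V) U

/-- Test functions for the weak formulation on T³ × [0,T):
C¹, periodic in x, compactly supported in time in [0,T). -/
def TestFun (T : ℝ) (φ : Vec3 → ℝ → ℝ) : Prop :=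
  ContDiff ℝ 1 (fun p : Vec3 × ℝ => φ p.1 p.2) ∧ PeriodicX φ ∧
  ∃ T' : ℝ, T' < T ∧ ∀ (x : Vec3) (t : ℝ), T' ≤ t → φ x t = 0

/-- The elastic stress Σ_{iα} of the augmented constitutive theory. -/
def SigmaA (ψ : Xi → ℝ → ℝ) (ξ : Xi) (θ : ℝ) (i α : Fin 3) : ℝ :=
  ∑ B : Idx, dXi B ψ ξ θ * dPhi B i α ξ.1


/-! ### Derivative infrastructure -/

def unc (f : Xi → ℝ → ℝ) : Xi × ℝ → ℝ := fun p => f p.1 p.2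

def Om : Set (Xi × ℝ) := Set.univ ×ˢ Set.Ioi (0:ℝ)

lemma isOpen_Om : IsOpen Om := isOpen_univ.prod isOpen_Ioi

lemma mem_Om {ξ : Xi} {θ : ℝ} (h : 0 < θ) : (ξ, θ) ∈ Om := ⟨trivial, h⟩

def eB (B : Idx) : Xi := xiUpd 0 B 1

lemma updMat_eq (F : Mat3) (i α : Fin 3) (s : ℝ) (j β : Fin 3) :
    updMat F i α s j β = F j β + (s - F i α) * (if j = i ∧ β = α then 1 else 0) := by
  unfold updMat
  by_cases hj : j = i
  · subst hj
    by_cases hb : β = α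
    · subst hb; simp
    · simp [hb]
  · simp [hj]

lemma xiUpd_eq (ξ : Xi) (B : Idx) (s : ℝ) :
    xiUpd ξ B s = ξ + (s - xiComp ξ B) • eB B := by
  rcases B with ⟨i, α⟩ | ⟨i, α⟩ | u
  · refine Prod.ext ?_ (Prod.ext ?_ ?_)
    · funext j β
      simp [xiUpd, eB, xiComp, updMat_eq]
    · simp [xiUpd, eB, xiComp]
    · simp [xiUpd, eB, xiComp]
  · refine Prod.ext ?_ (Prod.ext ?_ ?_)
    · simp [xiUpd, eB, xiComp]
    · funext j β
      simp [xiUpd, eB, xiComp, updMat_eq]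
    · simp [xiUpd, eB, xiComp]
  · refine Prod.ext ?_ (Prod.ext ?_ ?_)
    · simp [xiUpd, eB, xiComp]
    · simp [xiUpd, eB, xiComp]
    · simp [xiUpd, eB, xiComp]

lemma sum_eB (u : Xi) : ∑ B : Idx, xiComp u B • eB B = u := by
  refine Prod.ext ?_ (Prod.ext ?_ ?_)
  · funext j β
    simp only [Fintype.sum_sum_type, Prod.fst_add, Prod.fst_sum, Prod.smul_fst, eB, xiUpd,
      Pi.add_apply, Finset.sum_apply, Pi.smul_apply, updMat_eq, xiComp]
    simp [Fintype.sum_prod_type, ite_and]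
  · funext j β
    simp only [Fintype.sum_sum_type, Prod.fst_add, Prod.fst_sum, Prod.smul_fst, eB, xiUpd,
      Prod.snd_add, Prod.snd_sum, Prod.smul_snd,
      Pi.add_apply, Finset.sum_apply, Pi.smul_apply, updMat_eq, xiComp]
    simp [Fintype.sum_prod_type, ite_and]
  · simp only [Fintype.sum_sum_type, eB, xiUpd,
      Prod.snd_add, Prod.snd_sum, Prod.smul_snd, xiComp]
    simp

lemma abs_xiComp_le (u : Xi) (B : Idx) : |xiComp u B| ≤ ‖u‖ := by
  rcases B with ⟨i, α⟩ | ⟨i, α⟩ | _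
  · exact ((norm_le_pi_norm (u.1 i) α).trans (norm_le_pi_norm u.1 i)).trans (norm_fst_le u)
  · exact ((norm_le_pi_norm (u.2.1 i) α).trans (norm_le_pi_norm u.2.1 i)).trans
      ((norm_fst_le u.2).trans (norm_snd_le u))
  · exact (norm_snd_le u.2).trans (norm_snd_le u)

lemma norm_eB_le (B : Idx) : ‖eB B‖ ≤ 1 := by
  rcases B with ⟨i, α⟩ | ⟨i, α⟩ | _
  · simp only [eB, xiUpd, Prod.norm_def]
    refine max_le ?_ (by simp)
    refine (pi_norm_le_iff_of_nonneg zero_le_one).2 fun j => ?_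
    refine (pi_norm_le_iff_of_nonneg zero_le_one).2 fun β => ?_
    rw [updMat_eq]; split_ifs <;> simp
  · simp only [eB, xiUpd, Prod.norm_def]
    refine max_le (by simp) (max_le ?_ (by simp))
    refine (pi_norm_le_iff_of_nonneg zero_le_one).2 fun j => ?_
    refine (pi_norm_le_iff_of_nonneg zero_le_one).2 fun β => ?_
    rw [updMat_eq]; split_ifs <;> simp
  · simp [eB, xiUpd, Prod.norm_def]

lemma xiComp_sub (a b : Xi) (B : Idx) : xiComp (a - b) B = xiComp a B - xiComp b B := by
  rcases B with ⟨i, α⟩ | ⟨i, α⟩ | _ <;> simp [xiComp]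

lemma xiComp_eB (B : Idx) (A : Idx) : xiComp (eB B) A = if A = B then 1 else 0 := by
  rcases B with ⟨i, α⟩ | ⟨i, α⟩ | _ <;> rcases A with ⟨j, β⟩ | ⟨j, β⟩ | _ <;>
    simp [xiComp, eB, xiUpd, updMat_eq]

lemma dXi_eq {f : Xi → ℝ → ℝ} {ξ : Xi} {θ : ℝ} (B : Idx)
    (hf : DifferentiableAt ℝ (unc f) (ξ, θ)) :
    dXi B f ξ θ = fderiv ℝ (unc f) (ξ, θ) (eB B, 0) := by
  unfold dXi
  have h1 : HasDerivAt (fun s : ℝ => ((ξ + (s - xiComp ξ B) • eB B, θ) : Xi × ℝ))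
      (eB B, 0) (xiComp ξ B) := by
    refine HasDerivAt.prodMk ?_ (hasDerivAt_const _ _)
    have := (((hasDerivAt_id (xiComp ξ B)).sub_const (xiComp ξ B)).smul_const (eB B)).const_add ξ
    simpa using this
  have h2 : HasFDerivAt (unc f) (fderiv ℝ (unc f) (ξ, θ))
      ((fun s : ℝ => ((ξ + (s - xiComp ξ B) • eB B, θ) : Xi × ℝ)) (xiComp ξ B)) := by
    simpa using hf.hasFDerivAt
  have h3 := HasFDerivAt.comp_hasDerivAt (xiComp ξ B) h2 h1
  rw [← h3.deriv]
  congr 1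
  funext s
  simp [unc, xiUpd_eq]

lemma dTh_eq {f : Xi → ℝ → ℝ} {ξ : Xi} {θ : ℝ}
    (hf : DifferentiableAt ℝ (unc f) (ξ, θ)) :
    dTh f ξ θ = fderiv ℝ (unc f) (ξ, θ) (0, 1) := by
  have h1 : HasDerivAt (fun s : ℝ => ((ξ, s) : Xi × ℝ)) (0, 1) θ :=
    (hasDerivAt_const _ _).prodMk (hasDerivAt_id _)
  have h3 := hf.hasFDerivAt.comp_hasDerivAt θ h1
  exact h3.deriv

lemma fderiv_split {f : Xi → ℝ → ℝ} {ξ : Xi} {θ : ℝ}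
    (hf : DifferentiableAt ℝ (unc f) (ξ, θ)) (u : Xi) (t : ℝ) :
    fderiv ℝ (unc f) (ξ, θ) (u, t)
      = (∑ B : Idx, dXi B f ξ θ * xiComp u B) + dTh f ξ θ * t := by
  have h : ((u, t) : Xi × ℝ) = (∑ B : Idx, xiComp u B • ((eB B, 0) : Xi × ℝ))
      + t • ((0, 1) : Xi × ℝ) := by
    refine Prod.ext ?_ ?_
    · simp only [Prod.fst_add, Prod.fst_sum, Prod.smul_fst, sum_eB, smul_zero, add_zero]
    · simp [Prod.snd_sum, -Fintype.sum_sum_type]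
  rw [h, map_add, map_sum, dTh_eq hf]
  simp only [map_smul, smul_eq_mul, dXi_eq _ hf]
  congr 1
  · exact Finset.sum_congr rfl fun _ _ => mul_comm _ _
  · ring

lemma diffAt_Om {n : WithTop ℕ∞} (hn : n ≠ 0) {f : Xi → ℝ → ℝ} (hf : ContDiffOn ℝ n (unc f) Om)
    {p : Xi × ℝ} (hp : p ∈ Om) : DifferentiableAt ℝ (unc f) p :=
  (hf.differentiableOn hn).differentiableAt (isOpen_Om.mem_nhds hp)

lemma cd_apply {m n : WithTop ℕ∞} {f : Xi → ℝ → ℝ} (hf : ContDiffOn ℝ n (unc f) Om)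
    (hmn : m + 1 ≤ n) (w : Xi × ℝ) :
    ContDiffOn ℝ m (fun p => fderiv ℝ (unc f) p w) Om :=
  (hf.fderiv_of_isOpen isOpen_Om hmn).clm_apply contDiffOn_const

lemma ne_zero_of_add_one_le {m n : WithTop ℕ∞} (hmn : m + 1 ≤ n) : n ≠ 0 := by
  rintro rfl
  simp at hmn

lemma cd_dXi {m n : WithTop ℕ∞} {f : Xi → ℝ → ℝ} (hf : ContDiffOn ℝ n (unc f) Om)
    (hmn : m + 1 ≤ n) (B : Idx) : ContDiffOn ℝ m (unc (dXi B f)) Om := by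
  refine (cd_apply hf hmn (eB B, 0)).congr fun p hp => ?_
  exact dXi_eq B (diffAt_Om (ne_zero_of_add_one_le hmn) hf hp)

lemma cd_dTh {m n : WithTop ℕ∞} {f : Xi → ℝ → ℝ} (hf : ContDiffOn ℝ n (unc f) Om)
    (hmn : m + 1 ≤ n) : ContDiffOn ℝ m (unc (dTh f)) Om := by
  refine (cd_apply hf hmn (0, 1)).congr fun p hp => ?_
  exact dTh_eq (diffAt_Om (ne_zero_of_add_one_le hmn) hf hp)

lemma cd_eta {m n : WithTop ℕ∞} {f : Xi → ℝ → ℝ} (hf : ContDiffOn ℝ n (unc f) Om)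
    (hmn : m + 1 ≤ n) : ContDiffOn ℝ m (unc (etaHat f)) Om :=
  (cd_dTh hf hmn).neg

/-! ### Compact sets -/

def Kc (k d : ℝ) : Set (Xi × ℝ) := Metric.closedBall (0 : Xi) k ×ˢ Set.Icc d k

lemma Kc_compact (k d : ℝ) : IsCompact (Kc k d) :=
  (isCompact_closedBall _ _).prod isCompact_Icc

lemma Kc_convex (k d : ℝ) : Convex ℝ (Kc k d) :=
  (convex_closedBall _ _).prod (convex_Icc _ _)

lemma Kc_sub {k d : ℝ} (hd : 0 < d) : Kc k d ⊆ Om := fun _ hp => ⟨trivial, hd.trans_le hp.2.1⟩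

lemma mem_Kc {k d : ℝ} {ξ : Xi} {θ : ℝ} :
    (ξ, θ) ∈ Kc k d ↔ ‖ξ‖ ≤ k ∧ d ≤ θ ∧ θ ≤ k := by
  simp [Kc]

lemma bdd_Kc {f : Xi → ℝ → ℝ} (hf : ContinuousOn (unc f) Om) (k : ℝ) {d : ℝ} (hd : 0 < d) :
    ∃ C, 0 ≤ C ∧ ∀ ξ θ, (ξ, θ) ∈ Kc k d → |f ξ θ| ≤ C := by
  obtain ⟨C, hC⟩ := (Kc_compact k d).exists_bound_of_continuousOn (hf.mono (Kc_sub hd))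
  exact ⟨max C 0, le_max_right _ _, fun ξ θ h => (hC _ h).trans (le_max_left _ _)⟩

lemma lip_Kc {E : Type*} [NormedAddCommGroup E] [NormedSpace ℝ E] {g : Xi × ℝ → E}
    (hg : ContDiffOn ℝ 1 g Om) (k : ℝ) {d : ℝ} (hd : 0 < d) :
    ∃ C, 0 ≤ C ∧ ∀ x ∈ Kc k d, ∀ y ∈ Kc k d, ‖g x - g y‖ ≤ C * ‖x - y‖ := by
  have hc : ContinuousOn (fderiv ℝ g) Om := hg.continuousOn_fderiv_of_isOpen isOpen_Om le_rfl
  obtain ⟨C, hC⟩ := (Kc_compact k d).exists_bound_of_continuousOn (hc.mono (Kc_sub hd))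
  refine ⟨max C 0, le_max_right _ _, fun x hx y hy => ?_⟩
  refine (Kc_convex k d).norm_image_sub_le_of_norm_fderiv_le (𝕜 := ℝ) (fun z hz => ?_)
    (fun z hz => (hC z hz).trans (le_max_left _ _)) hy hx
  exact (hg.differentiableOn one_ne_zero).differentiableAt (isOpen_Om.mem_nhds (Kc_sub hd hz))

lemma taylor_Kc {g : Xi × ℝ → ℝ}
    (hg : ContDiffOn ℝ 2 g Om) (k : ℝ) {d : ℝ} (hd : 0 < d) :
    ∃ C, 0 ≤ C ∧ ∀ x ∈ Kc k d, ∀ y ∈ Kc k d,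
      |g x - g y - fderiv ℝ g y (x - y)| ≤ C * ‖x - y‖ ^ 2 := by
  obtain ⟨C, hC0, hC⟩ := lip_Kc (g := fderiv ℝ g)
    (hg.fderiv_of_isOpen isOpen_Om (by norm_num)) k hd
  refine ⟨C, hC0, fun x hx y hy => ?_⟩
  have hs : segment ℝ y x ⊆ Kc k d := (Kc_convex k d).segment_subset hy hx
  have := (convex_segment y x).norm_image_sub_le_of_norm_fderiv_le' (𝕜 := ℝ) (f := g)
    (φ := fderiv ℝ g y) (C := C * ‖x - y‖) (fun z hz => ?_) (fun z hz => ?_)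
    (left_mem_segment ℝ y x) (right_mem_segment ℝ y x)
  · rw [Real.norm_eq_abs] at this
    calc _ ≤ _ := this
      _ = _ := by ring
  · exact (hg.differentiableOn two_ne_zero).differentiableAt
      (isOpen_Om.mem_nhds (Kc_sub hd (hs hz)))
  · refine (hC z (hs hz) y hy).trans ?_
    gcongr
    obtain ⟨a, b, ha, hb, hab, rfl⟩ := hz
    have : a • y + b • x - y = b • (x - y) := by
      rw [← eq_sub_iff_add_eq] at hab
      rw [hab]; module
    rw [this, norm_smul, Real.norm_of_nonneg hb]
    exact mul_le_of_le_one_left (norm_nonneg _) (by linarith)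

/-- relative quantity, generic -/
def relQ (f : Xi → ℝ → ℝ) (ξ : Xi) (θ : ℝ) (ξ' : Xi) (θ' : ℝ) : ℝ :=
  f ξ θ - f ξ' θ' - (∑ A : Idx, dXi A f ξ' θ' * (xiComp ξ A - xiComp ξ' A))
    - dTh f ξ' θ' * (θ - θ')

lemma relQ_eq {f : Xi → ℝ → ℝ} {ξ ξ' : Xi} {θ θ' : ℝ}
    (hf : DifferentiableAt ℝ (unc f) (ξ', θ')) :
    relQ f ξ θ ξ' θ' = unc f (ξ, θ) - unc f (ξ', θ')
      - fderiv ℝ (unc f) (ξ', θ') ((ξ, θ) - (ξ', θ')) := by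
  rw [Prod.mk_sub_mk, fderiv_split hf]
  simp only [relQ, unc, xiComp_sub]
  ring

lemma relQ_near {f : Xi → ℝ → ℝ} (hf : ContDiffOn ℝ 2 (unc f) Om) (k : ℝ) {d : ℝ} (hd : 0 < d) :
    ∃ C, 0 ≤ C ∧ ∀ ξ θ ξ' θ', (ξ, θ) ∈ Kc k d → (ξ', θ') ∈ Kc k d →
      |relQ f ξ θ ξ' θ'| ≤ C * ‖((ξ, θ) : Xi × ℝ) - (ξ', θ')‖ ^ 2 := by
  obtain ⟨C, h0, hC⟩ := taylor_Kc hf k hd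
  refine ⟨C, h0, fun ξ θ ξ' θ' h h' => ?_⟩
  rw [relQ_eq (diffAt_Om two_ne_zero hf (Kc_sub hd h'))]
  exact hC _ h _ h'

lemma relQ_far {f : Xi → ℝ → ℝ} (hf : ContDiffOn ℝ 2 (unc f) Om) (k : ℝ) {d : ℝ} (hd : 0 < d) :
    ∃ C, 0 ≤ C ∧ ∀ ξ θ ξ' θ', (ξ', θ') ∈ Kc k d →
      |relQ f ξ θ ξ' θ'| ≤ |f ξ θ| + C * (1 + ‖((ξ, θ) : Xi × ℝ) - (ξ', θ')‖) := by
  obtain ⟨C, h0, hC⟩ := bdd_Kc hf.continuousOn k hd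
  have hc : ContinuousOn (fderiv ℝ (unc f)) Om :=
    hf.continuousOn_fderiv_of_isOpen isOpen_Om (by norm_num)
  obtain ⟨D, hD⟩ := (Kc_compact k d).exists_bound_of_continuousOn (hc.mono (Kc_sub hd))
  refine ⟨max C D, h0.trans (le_max_left _ _), fun ξ θ ξ' θ' h' => ?_⟩
  rw [relQ_eq (diffAt_Om two_ne_zero hf (Kc_sub hd h'))]
  have h1 : |fderiv ℝ (unc f) (ξ', θ') ((ξ, θ) - (ξ', θ'))|
      ≤ max C D * ‖((ξ, θ) : Xi × ℝ) - (ξ', θ')‖ := by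
    refine ((fderiv ℝ (unc f) (ξ', θ')).le_opNorm _).trans ?_
    gcongr
    exact (hD _ h').trans (le_max_right _ _)
  have h2 : |f ξ' θ'| ≤ max C D := (hC _ _ h').trans (le_max_left _ _)
  have h3 := abs_sub (unc f (ξ, θ) - unc f (ξ', θ'))
    (fderiv ℝ (unc f) (ξ', θ') ((ξ, θ) - (ξ', θ')))
  have h4 := abs_sub (unc f (ξ, θ)) (unc f (ξ', θ'))
  have e1 : unc f (ξ, θ) = f ξ θ := rfl
  have e2 : unc f (ξ', θ') = f ξ' θ' := rfl
  rw [e1, e2] at h3 h4 ⊢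
  linarith

/-! ### One dimensional convexity -/

lemma one_dim {h h1 h2 : ℝ → ℝ} {μ : ℝ}
    (d1 : ∀ t ∈ Set.Icc (0:ℝ) 1, HasDerivAt h (h1 t) t)
    (d2 : ∀ t ∈ Set.Icc (0:ℝ) 1, HasDerivAt h1 (h2 t) t)
    (hμ : ∀ t ∈ Set.Icc (0:ℝ) 1, μ ≤ h2 t) : μ / 2 ≤ h 1 - h 0 - h1 0 := by
  have m1 : MonotoneOn (fun t => h1 t - μ * t) (Set.Icc 0 1) := by
    have hd : ∀ t ∈ Set.Icc (0:ℝ) 1, HasDerivAt (fun t => h1 t - μ * t) (h2 t - μ) t := by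
      intro t ht
      simpa using (d2 t ht).fun_sub ((hasDerivAt_id' t).const_mul μ)
    refine monotoneOn_of_deriv_nonneg (convex_Icc 0 1)
      (fun t ht => (hd t ht).continuousAt.continuousWithinAt) ?_ ?_
    · intro t ht
      exact (hd t (interior_subset ht)).differentiableAt.differentiableWithinAt
    · intro t ht
      rw [(hd t (interior_subset ht)).deriv]
      linarith [hμ t (interior_subset ht)]
  have m2 : MonotoneOn (fun t => h t - h1 0 * t - μ / 2 * t ^ 2) (Set.Icc 0 1) := by
    have hd : ∀ t ∈ Set.Icc (0:ℝ) 1,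
        HasDerivAt (fun t => h t - h1 0 * t - μ / 2 * t ^ 2) (h1 t - h1 0 - μ * t) t := by
      intro t ht
      have := ((d1 t ht).fun_sub ((hasDerivAt_id' t).const_mul (h1 0))).fun_sub
        (((hasDerivAt_id' t).fun_pow 2).const_mul (μ / 2))
      refine this.congr_deriv ?_
      push_cast; ring
    refine monotoneOn_of_deriv_nonneg (convex_Icc 0 1)
      (fun t ht => (hd t ht).continuousAt.continuousWithinAt) ?_ ?_
    · intro t ht
      exact (hd t (interior_subset ht)).differentiableAt.differentiableWithinAt
    · intro t ht
      rw [(hd t (interior_subset ht)).deriv]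
      have := m1 (Set.left_mem_Icc.2 zero_le_one) (interior_subset ht) (interior_subset ht).1
      simp only at this
      linarith
  have := m2 (Set.left_mem_Icc.2 zero_le_one) (Set.right_mem_Icc.2 zero_le_one) zero_le_one
  simp only at this
  linarith

lemma line_xi {f : Xi → ℝ → ℝ} (hf : ContDiffOn ℝ 1 (unc f) Om) {θ : ℝ} (hθ : 0 < θ)
    (ξ u : Xi) (t : ℝ) :
    HasDerivAt (fun t : ℝ => f (ξ + t • u) θ)
      (∑ B : Idx, dXi B f (ξ + t • u) θ * xiComp u B) t := by
  have h0 := diffAt_Om one_ne_zero hf (mem_Om (ξ := ξ + t • u) hθ)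
  have h1 : HasDerivAt (fun s : ℝ => ((ξ + s • u, θ) : Xi × ℝ)) (u, 0) t := by
    refine HasDerivAt.prodMk ?_ (hasDerivAt_const _ _)
    simpa using ((hasDerivAt_id' t).smul_const u).const_add ξ
  have h3 := HasFDerivAt.comp_hasDerivAt t h0.hasFDerivAt h1
  rw [fderiv_split h0] at h3
  simp only [mul_zero, add_zero] at h3
  exact h3

lemma line_th {f : Xi → ℝ → ℝ} (hf : ContDiffOn ℝ 1 (unc f) Om) {θ : ℝ} (hθ : 0 < θ) (ξ : Xi) :
    HasDerivAt (fun s : ℝ => f ξ s) (dTh f ξ θ) θ := by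
  have h0 := diffAt_Om one_ne_zero hf (mem_Om (ξ := ξ) hθ)
  have h1 : HasDerivAt (fun s : ℝ => ((ξ, s) : Xi × ℝ)) (0, 1) θ :=
    (hasDerivAt_const _ _).prodMk (hasDerivAt_id _)
  have h3 := HasFDerivAt.comp_hasDerivAt θ h0.hasFDerivAt h1
  rw [← dTh_eq h0] at h3
  exact h3

lemma convex_xi {ψ : Xi → ℝ → ℝ} (hψ : ContDiffOn ℝ 3 (unc ψ) Om) {θ : ℝ} (hθ : 0 < θ)
    (ξ u : Xi) {μ : ℝ}
    (hμ : ∀ t ∈ Set.Icc (0:ℝ) 1, μ ≤ ∑ A : Idx, ∑ B : Idx,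
      dXi A (dXi B ψ) (ξ + t • u) θ * xiComp u A * xiComp u B) :
    μ / 2 ≤ ψ (ξ + u) θ - ψ ξ θ - ∑ B : Idx, dXi B ψ ξ θ * xiComp u B := by
  have h := one_dim (h := fun t : ℝ => ψ (ξ + t • u) θ)
    (h1 := fun t : ℝ => ∑ B : Idx, dXi B ψ (ξ + t • u) θ * xiComp u B)
    (h2 := fun t : ℝ => ∑ B : Idx, (∑ A : Idx, dXi A (dXi B ψ) (ξ + t • u) θ * xiComp u A)
      * xiComp u B) (μ := μ)
    (fun t _ => line_xi (hψ.of_le (by norm_num)) hθ ξ u t)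
    (fun t _ => HasDerivAt.fun_sum fun B _ =>
      (line_xi (cd_dXi hψ (by norm_num) B) hθ ξ u t).mul_const _)
    (fun t ht => by
      refine (hμ t ht).trans (le_of_eq ?_)
      rw [Finset.sum_comm]
      simp only [Finset.sum_mul])
  simpa only [one_smul, zero_smul, add_zero] using h

lemma concave_th {ψ : Xi → ℝ → ℝ} (hψ : ContDiffOn ℝ 3 (unc ψ) Om) {θ θ' : ℝ} (hθ : 0 < θ)
    (hθ' : 0 < θ') (ξ : Xi) {μ : ℝ}
    (hμ : ∀ s ∈ Set.uIcc θ θ', μ ≤ dTh (etaHat ψ) ξ s) :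
    μ / 2 * (θ - θ') ^ 2 ≤ ψ ξ θ - ψ ξ θ' + etaHat ψ ξ θ * (θ - θ') := by
  have hmem : ∀ t ∈ Set.Icc (0:ℝ) 1, θ + t * (θ' - θ) ∈ Set.uIcc θ θ' := by
    intro t ht
    rw [← segment_eq_uIcc]
    exact ⟨1 - t, t, by linarith [ht.2], ht.1, by ring, by simp only [smul_eq_mul]; ring⟩
  have hpos : ∀ t ∈ Set.Icc (0:ℝ) 1, 0 < θ + t * (θ' - θ) := by
    intro t ht
    exact (lt_min hθ hθ').trans_le (hmem t ht).1
  have hl : ∀ t : ℝ, HasDerivAt (fun t : ℝ => θ + t * (θ' - θ)) (θ' - θ) t := by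
    intro t
    simpa using ((hasDerivAt_id' t).mul_const (θ' - θ)).const_add θ
  have h := one_dim (h := fun t : ℝ => - ψ ξ (θ + t * (θ' - θ)))
    (h1 := fun t : ℝ => etaHat ψ ξ (θ + t * (θ' - θ)) * (θ' - θ))
    (h2 := fun t : ℝ => dTh (etaHat ψ) ξ (θ + t * (θ' - θ)) * (θ' - θ) * (θ' - θ))
    (μ := μ * (θ' - θ) ^ 2)
    (fun t ht => by
      have := (HasDerivAt.comp t (line_th (hψ.of_le (by norm_num)) (hpos t ht) ξ) (hl t)).neg
      refine this.congr_deriv ?_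
      simp [etaHat])
    (fun t ht => by
      have := (HasDerivAt.comp t (line_th (cd_eta hψ (by norm_num)) (hpos t ht) ξ)
        (hl t)).mul_const (θ' - θ)
      exact this)
    (fun t ht => by
      have := mul_le_mul_of_nonneg_right (hμ _ (hmem t ht)) (sq_nonneg (θ' - θ))
      linarith)
  simp only [one_mul, zero_mul, add_zero, add_sub_cancel] at h
  nlinarith [h]

/-! ### Null Lagrangian derivatives -/

lemma abs_eps3_le (i j k : Fin 3) : |eps3 i j k| ≤ 1 := by
  unfold eps3; split_ifs <;> simp

lemma abs_sum3_le {f : Fin 3 → ℝ} {K : ℝ} (h : ∀ i, |f i| ≤ K) : |∑ i, f i| ≤ 3 * K := by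
  refine (Finset.abs_sum_le_sum_abs _ _).trans ?_
  refine (Finset.sum_le_sum fun i _ => h i).trans ?_
  simp

def Em (i α j β : Fin 3) : ℝ := if j = i ∧ β = α then 1 else 0

lemma abs_Em_le (i α j β : Fin 3) : |Em i α j β| ≤ 1 := by
  unfold Em; split_ifs <;> simp

lemma hd_upd (F : Mat3) (i α j β : Fin 3) :
    HasDerivAt (fun s => updMat F i α s j β) (Em i α j β) (F i α) := by
  simp only [updMat_eq]
  simpa [Em] using
    (((hasDerivAt_id' (F i α)).sub_const (F i α)).mul_const (Em i α j β)).const_add (F j β)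

lemma upd_self (F : Mat3) (i α : Fin 3) : updMat F i α (F i α) = F := by
  simp [updMat]

lemma dPhi_F (j β i α : Fin 3) (F : Mat3) : dPhi (.inl (j, β)) i α F = Em i α j β :=
  (hd_upd F i α j β).deriv

lemma dPhi_cof (a b i α : Fin 3) (F : Mat3) : dPhi (.inr (.inl (a, b))) i α F
    = (1/2) * ∑ j, ∑ k, ∑ β, ∑ γ, eps3 a j k * eps3 b β γ *
      (Em i α j β * F k γ + F j β * Em i α k γ) := by
  refine HasDerivAt.deriv ?_
  refine HasDerivAt.const_mul (1/2 : ℝ) ?_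
  refine HasDerivAt.fun_sum fun j _ => HasDerivAt.fun_sum fun k _ =>
    HasDerivAt.fun_sum fun β _ => HasDerivAt.fun_sum fun γ _ => ?_
  have := ((hd_upd F i α j β).const_mul (eps3 a j k * eps3 b β γ)).fun_mul (hd_upd F i α k γ)
  rw [upd_self] at this
  refine this.congr_deriv ?_
  ring

lemma dPhi_det (i α : Fin 3) (F : Mat3) (u : Unit) : dPhi (.inr (.inr u)) i α F
    = (1/6) * ∑ a, ∑ j, ∑ k, ∑ b, ∑ β, ∑ γ, eps3 a j k * eps3 b β γ *
      (Em i α a b * F j β * F k γ + F a b * Em i α j β * F k γ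
        + F a b * F j β * Em i α k γ) := by
  refine HasDerivAt.deriv ?_
  refine HasDerivAt.const_mul (1/6 : ℝ) ?_
  refine HasDerivAt.fun_sum fun a _ => HasDerivAt.fun_sum fun j _ => HasDerivAt.fun_sum fun k _ =>
    HasDerivAt.fun_sum fun b _ => HasDerivAt.fun_sum fun β _ => HasDerivAt.fun_sum fun γ _ => ?_
  have := (((hd_upd F i α a b).const_mul (eps3 a j k * eps3 b β γ)).fun_mul
    (hd_upd F i α j β)).fun_mul (hd_upd F i α k γ)
  rw [upd_self] at this
  refine this.congr_deriv ?_
  ring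

lemma entry_le (F : Mat3) (i j : Fin 3) : |F i j| ≤ ‖F‖ :=
  (norm_le_pi_norm (F i) j).trans (norm_le_pi_norm F i)

lemma abs_mul_le_one_mul {x y K : ℝ} (hx : |x| ≤ 1) (hy : |y| ≤ K) : |x * y| ≤ K := by
  rw [abs_mul]
  calc |x| * |y| ≤ 1 * |y| := by gcongr
    _ ≤ K := by linarith

lemma dPhi_cof_diff (a b i α : Fin 3) (F F' : Mat3) :
    |dPhi (.inr (.inl (a, b))) i α F - dPhi (.inr (.inl (a, b))) i α F'| ≤ 81 * ‖F - F'‖ := by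
  have : dPhi (.inr (.inl (a, b))) i α F - dPhi (.inr (.inl (a, b))) i α F'
      = dPhi (.inr (.inl (a, b))) i α (F - F') := by
    simp only [dPhi_cof, ← mul_sub, ← Finset.sum_sub_distrib]
    congr 1
    refine Finset.sum_congr rfl fun j _ => Finset.sum_congr rfl fun k _ =>
      Finset.sum_congr rfl fun β _ => Finset.sum_congr rfl fun γ _ => ?_
    simp only [Pi.sub_apply]; ring
  rw [this, dPhi_cof, abs_mul]
  set G := F - F'
  have h : |∑ j, ∑ k, ∑ β, ∑ γ, eps3 a j k * eps3 b β γ *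
      (Em i α j β * G k γ + G j β * Em i α k γ)| ≤ 3 * (3 * (3 * (3 * (2 * ‖G‖)))) := by
    refine abs_sum3_le fun j => abs_sum3_le fun k => abs_sum3_le fun β => abs_sum3_le fun γ => ?_
    refine abs_mul_le_one_mul (abs_mul_le_one_mul (abs_eps3_le _ _ _) (abs_eps3_le _ _ _)) ?_
    refine (abs_add_le _ _).trans ?_
    have h1 := abs_mul_le_one_mul (abs_Em_le i α j β) (entry_le G k γ)
    have h2 := abs_mul_le_one_mul (abs_Em_le i α k γ) (entry_le G j β)
    rw [mul_comm (G j β)]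
    linarith
  rw [abs_of_pos (by norm_num : (0:ℝ) < 1/2)]
  linarith

lemma prod_diff {a b a' b' D S : ℝ} (ha : |a - a'| ≤ D) (hb : |b - b'| ≤ D)
    (h1 : |a| ≤ S) (h2 : |b'| ≤ S) : |a * b - a' * b'| ≤ 2 * (D * S) := by
  have : a * b - a' * b' = a * (b - b') + (a - a') * b' := by ring
  rw [this]
  refine (abs_add_le _ _).trans ?_
  rw [abs_mul, abs_mul]
  have hD : 0 ≤ D := (abs_nonneg _).trans ha
  have hS : 0 ≤ S := (abs_nonneg _).trans h1
  have := mul_le_mul h1 hb (abs_nonneg _) hS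
  have := mul_le_mul ha h2 (abs_nonneg _) hD
  linarith

lemma dPhi_det_diff (i α : Fin 3) (F F' : Mat3) (u : Unit) :
    |dPhi (.inr (.inr u)) i α F - dPhi (.inr (.inr u)) i α F'|
      ≤ 729 * (‖F - F'‖ * (‖F‖ + ‖F'‖)) := by
  simp only [dPhi_det, ← mul_sub, ← Finset.sum_sub_distrib]
  rw [abs_mul, abs_of_pos (by norm_num : (0:ℝ) < 1/6)]
  set K := ‖F - F'‖ * (‖F‖ + ‖F'‖)
  have key : ∀ a b c d : Fin 3, |F a b * F c d - F' a b * F' c d| ≤ 2 * K := by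
    intro a b c d
    refine prod_diff (entry_le (F - F') a b) (entry_le (F - F') c d)
      ((entry_le F a b).trans ?_) ((entry_le F' c d).trans ?_)
    · linarith [norm_nonneg F']
    · linarith [norm_nonneg F]
  have h : |∑ a, ∑ j, ∑ k, ∑ b, ∑ β, ∑ γ, eps3 a j k * eps3 b β γ *
      ((Em i α a b * F j β * F k γ + F a b * Em i α j β * F k γ
        + F a b * F j β * Em i α k γ) - (Em i α a b * F' j β * F' k γ
        + F' a b * Em i α j β * F' k γ + F' a b * F' j β * Em i α k γ))|
      ≤ 3 * (3 * (3 * (3 * (3 * (3 * (6 * K)))))) := by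
    refine abs_sum3_le fun a => abs_sum3_le fun j => abs_sum3_le fun k => abs_sum3_le fun b =>
      abs_sum3_le fun β => abs_sum3_le fun γ => ?_
    refine abs_mul_le_one_mul (abs_mul_le_one_mul (abs_eps3_le _ _ _) (abs_eps3_le _ _ _)) ?_
    have h1 := abs_mul_le_one_mul (abs_Em_le i α a b) (key j β k γ)
    have h2 := abs_mul_le_one_mul (abs_Em_le i α j β) (key a b k γ)
    have h3 := abs_mul_le_one_mul (abs_Em_le i α k γ) (key a b j β)
    have e : (Em i α a b * F j β * F k γ + F a b * Em i α j β * F k γ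
        + F a b * F j β * Em i α k γ) - (Em i α a b * F' j β * F' k γ
        + F' a b * Em i α j β * F' k γ + F' a b * F' j β * Em i α k γ)
      = Em i α a b * (F j β * F k γ - F' j β * F' k γ)
        + Em i α j β * (F a b * F k γ - F' a b * F' k γ)
        + Em i α k γ * (F a b * F j β - F' a b * F' j β) := by ring
    rw [e]
    refine (abs_add_three _ _ _).trans ?_
    linarith
  linarith

/-! ### The relative entropy without the kinetic part -/

def I0 (ψ : Xi → ℝ → ℝ) (ξ : Xi) (θ : ℝ) (ξ' : Xi) (θ' : ℝ) : ℝ :=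
  psiRel ψ ξ θ ξ' θ' + (etaHat ψ ξ θ - etaHat ψ ξ' θ') * (θ - θ')

lemma I0_split (ψ : Xi → ℝ → ℝ) (ξ : Xi) (θ : ℝ) (ξ' : Xi) (θ' : ℝ) :
    I0 ψ ξ θ ξ' θ' = (ψ ξ θ' - ψ ξ' θ' - ∑ B : Idx, dXi B ψ ξ' θ' * xiComp (ξ - ξ') B)
      + (ψ ξ θ - ψ ξ θ' + etaHat ψ ξ θ * (θ - θ')) := by
  simp only [I0, psiRel, xiComp_sub]; ring

lemma I0_eq (ψ : Xi → ℝ → ℝ) (ξ : Xi) (θ : ℝ) (ξ' : Xi) (θ' : ℝ) :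
    I0 ψ ξ θ ξ' θ' = eHat ψ ξ θ - θ' * etaHat ψ ξ θ
      - (ψ ξ' θ' + ∑ B : Idx, dXi B ψ ξ' θ' * xiComp (ξ - ξ') B) := by
  simp only [I0, psiRel, xiComp_sub, eHat, etaHat]; ring

def Hq (ψ : Xi → ℝ → ℝ) (ξ : Xi) (θ : ℝ) (u : Xi) : ℝ :=
  ∑ A : Idx, ∑ B : Idx, dXi A (dXi B ψ) ξ θ * xiComp u A * xiComp u B

lemma xiComp_smul (c : ℝ) (u : Xi) (B : Idx) : xiComp (c • u) B = c * xiComp u B := by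
  rcases B with ⟨i, α⟩ | ⟨i, α⟩ | _ <;> simp [xiComp]

lemma continuous_xiComp (B : Idx) : Continuous fun u : Xi => xiComp u B := by
  rcases B with ⟨i, α⟩ | ⟨i, α⟩ | _ <;> simp only [xiComp] <;> fun_prop

lemma xiComp_ne {u : Xi} (hu : u ≠ 0) : xiComp u ≠ 0 := by
  intro h
  apply hu
  rw [← sum_eB u, h]
  simp

lemma Hq_nonneg {ψ : Xi → ℝ → ℝ} (hc : PsiConvex ψ) (ξ : Xi) {θ : ℝ} (hθ : 0 < θ) (u : Xi) :
    0 ≤ Hq ψ ξ θ u := by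
  by_cases hu : xiComp u = 0
  · simp [Hq, hu]
  · exact ((hc ξ θ hθ).1 _ hu).le

lemma Hq_smul (ψ : Xi → ℝ → ℝ) (ξ : Xi) (θ : ℝ) (c : ℝ) (u : Xi) :
    Hq ψ ξ θ (c • u) = c ^ 2 * Hq ψ ξ θ u := by
  simp only [Hq, Finset.mul_sum, xiComp_smul]
  refine Finset.sum_congr rfl fun A _ => Finset.sum_congr rfl fun B _ => ?_
  ring

lemma Hq_lower {ψ : Xi → ℝ → ℝ} (hψ : ContDiffOn ℝ 3 (unc ψ) Om) (hc : PsiConvex ψ)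
    (k : ℝ) {d : ℝ} (hd : 0 < d) :
    ∃ m, 0 < m ∧ ∀ ξ θ, (ξ, θ) ∈ Kc k d → ∀ u, m * ‖u‖ ^ 2 ≤ Hq ψ ξ θ u := by
  have hcont : ContinuousOn (fun p : (Xi × ℝ) × Xi => Hq ψ p.1.1 p.1.2 p.2)
      (Kc k d ×ˢ Metric.sphere (0 : Xi) 1) := by
    unfold Hq
    refine continuousOn_finsetSum _ fun A _ => continuousOn_finsetSum _ fun B _ => ?_
    have h1 : ContinuousOn (unc (dXi A (dXi B ψ))) Om :=
      (cd_dXi (m := 1) (cd_dXi (m := 2) hψ (by norm_num) B) (by norm_num) A).continuousOn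
    have h2 : ContinuousOn (fun p : (Xi × ℝ) × Xi => unc (dXi A (dXi B ψ)) p.1)
        (Kc k d ×ˢ Metric.sphere (0 : Xi) 1) :=
      h1.comp continuous_fst.continuousOn (fun p hp => Kc_sub hd hp.1)
    exact (h2.mul ((continuous_xiComp A).comp continuous_snd).continuousOn).mul
      ((continuous_xiComp B).comp continuous_snd).continuousOn
  obtain ⟨m, hm, h⟩ := ((Kc_compact k d).prod (isCompact_sphere (0 : Xi) 1)).exists_forall_le'
    hcont (a := 0) (by
      rintro ⟨⟨ξ, θ⟩, u⟩ ⟨h1, h2⟩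
      refine (hc ξ θ (Kc_sub hd h1).2).1 _ (xiComp_ne ?_)
      rintro rfl
      simp at h2)
  refine ⟨m, hm, fun ξ θ hK u => ?_⟩
  by_cases hu : u = 0
  · subst hu
    simp only [norm_zero]
    have := Hq_nonneg hc ξ (Kc_sub hd hK).2 0
    simpa using this
  · have hn : ‖u‖ ≠ 0 := norm_ne_zero_iff.2 hu
    have h1 := h ((ξ, θ), ‖u‖⁻¹ • u) ⟨hK, by simp [norm_smul, hn]⟩
    have h2 : Hq ψ ξ θ u = ‖u‖ ^ 2 * Hq ψ ξ θ (‖u‖⁻¹ • u) := by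
      rw [← Hq_smul, smul_smul, mul_inv_cancel₀ hn, one_smul]
    rw [h2, mul_comm]
    exact mul_le_mul_of_nonneg_left h1 (sq_nonneg _)

lemma brA_nonneg {ψ : Xi → ℝ → ℝ} (hψ : ContDiffOn ℝ 3 (unc ψ) Om) (hc : PsiConvex ψ)
    (ξ u : Xi) {θ : ℝ} (hθ : 0 < θ) :
    0 ≤ ψ (ξ + u) θ - ψ ξ θ - ∑ B : Idx, dXi B ψ ξ θ * xiComp u B := by
  have := convex_xi hψ hθ ξ u (μ := 0) (fun t _ => Hq_nonneg hc _ hθ u)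
  simpa using this

lemma brB_nonneg {ψ : Xi → ℝ → ℝ} (hψ : ContDiffOn ℝ 3 (unc ψ) Om) (hc : PsiConvex ψ)
    (ξ : Xi) {θ θ' : ℝ} (hθ : 0 < θ) (hθ' : 0 < θ') :
    0 ≤ ψ ξ θ - ψ ξ θ' + etaHat ψ ξ θ * (θ - θ') := by
  have := concave_th hψ hθ hθ' ξ (μ := 0)
    (fun s hs => ((hc ξ s ((lt_min hθ hθ').trans_le hs.1)).2).le)
  simpa using this

lemma brA_quad {ψ : Xi → ℝ → ℝ} (hψ : ContDiffOn ℝ 3 (unc ψ) Om) (hc : PsiConvex ψ)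
    (k : ℝ) {d : ℝ} (hd : 0 < d) :
    ∃ m, 0 < m ∧ ∀ ξ ξ' θ', ‖ξ‖ ≤ k → (ξ', θ') ∈ Kc k d → m * ‖ξ - ξ'‖ ^ 2 ≤
      ψ ξ θ' - ψ ξ' θ' - ∑ B : Idx, dXi B ψ ξ' θ' * xiComp (ξ - ξ') B := by
  obtain ⟨m, hm, h⟩ := Hq_lower hψ hc k hd
  refine ⟨m / 2, by positivity, fun ξ ξ' θ' hξ hK => ?_⟩
  have := convex_xi hψ (Kc_sub hd hK).2 ξ' (ξ - ξ') (μ := m * ‖ξ - ξ'‖ ^ 2) (fun t ht => by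
    refine h _ _ ?_ _
    rw [mem_Kc] at hK ⊢
    refine ⟨?_, hK.2⟩
    have hcv := (convex_closedBall (0 : Xi) k).add_smul_sub_mem (x := ξ') (y := ξ)
      (by simpa using hK.1) (by simpa using hξ) ht
    simpa using hcv)
  rw [add_sub_cancel] at this
  linarith

lemma brB_quad {ψ : Xi → ℝ → ℝ} (hψ : ContDiffOn ℝ 3 (unc ψ) Om) (hc : PsiConvex ψ)
    (k : ℝ) {d : ℝ} (hd : 0 < d) :
    ∃ m, 0 < m ∧ ∀ ξ θ θ', (ξ, θ) ∈ Kc k d → (ξ, θ') ∈ Kc k d → m * (θ - θ') ^ 2 ≤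
      ψ ξ θ - ψ ξ θ' + etaHat ψ ξ θ * (θ - θ') := by
  have h1 : ContinuousOn (unc (dTh (etaHat ψ))) (Kc k d) :=
    (cd_dTh (m := 1) (cd_eta (m := 2) hψ (by norm_num)) (by norm_num)).continuousOn.mono
      (Kc_sub hd)
  obtain ⟨m, hm, h⟩ := (Kc_compact k d).exists_forall_le' h1 (a := 0)
    (fun p hp => (hc p.1 p.2 (Kc_sub hd hp).2).2)
  refine ⟨m / 2, by positivity, fun ξ θ θ' hK hK' => ?_⟩
  refine concave_th hψ (Kc_sub hd hK).2 (Kc_sub hd hK').2 ξ (fun s hs => h (ξ, s) ?_)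
  rw [mem_Kc] at hK hK' ⊢
  exact ⟨hK.1, (le_min hK.2.1 hK'.2.1).trans hs.1, hs.2.trans (max_le hK.2.2 hK'.2.2)⟩

lemma near_lower {ψ : Xi → ℝ → ℝ} (hψ : ContDiffOn ℝ 3 (unc ψ) Om) (hc : PsiConvex ψ)
    (k : ℝ) {d : ℝ} (hd : 0 < d) :
    ∃ C, 0 ≤ C ∧ ∀ ξ θ ξ' θ', (ξ, θ) ∈ Kc k d → (ξ', θ') ∈ Kc k d →
      ‖((ξ, θ) : Xi × ℝ) - (ξ', θ')‖ ^ 2 ≤ C * I0 ψ ξ θ ξ' θ' := by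
  obtain ⟨m1, hm1, h1⟩ := brA_quad hψ hc k hd
  obtain ⟨m2, hm2, h2⟩ := brB_quad hψ hc k hd
  refine ⟨1 / m1 + 1 / m2, by positivity, fun ξ θ ξ' θ' hK hK' => ?_⟩
  have hK1 := mem_Kc.1 hK
  have hK2 := mem_Kc.1 hK'
  have a1 := h1 ξ ξ' θ' hK1.1 hK'
  have a2 := h2 ξ θ θ' hK (mem_Kc.2 ⟨hK1.1, hK2.2⟩)
  have hI := I0_split ψ ξ θ ξ' θ'
  have p1 : 0 ≤ m1 * ‖ξ - ξ'‖ ^ 2 := by positivity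
  have p2 : 0 ≤ m2 * (θ - θ') ^ 2 := by positivity
  have b1 : ‖ξ - ξ'‖ ^ 2 ≤ 1 / m1 * I0 ψ ξ θ ξ' θ' := by
    rw [one_div_mul_eq_div, le_div_iff₀ hm1]; linarith
  have b2 : (θ - θ') ^ 2 ≤ 1 / m2 * I0 ψ ξ θ ξ' θ' := by
    rw [one_div_mul_eq_div, le_div_iff₀ hm2]; linarith
  have b3 : ‖((ξ, θ) : Xi × ℝ) - (ξ', θ')‖ ^ 2 ≤ ‖ξ - ξ'‖ ^ 2 + (θ - θ') ^ 2 := by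
    rw [Prod.mk_sub_mk, Prod.norm_mk]
    rcases max_cases ‖ξ - ξ'‖ ‖θ - θ'‖ with h | h
    · rw [h.1]; nlinarith [sq_nonneg (θ - θ')]
    · rw [h.1, Real.norm_eq_abs, sq_abs]; nlinarith [sq_nonneg ‖ξ - ξ'‖]
  linarith

lemma lin_bound {ψ : Xi → ℝ → ℝ} (hψ : ContDiffOn ℝ 3 (unc ψ) Om) (k : ℝ) {d : ℝ} (hd : 0 < d) :
    ∃ C, 0 ≤ C ∧ ∀ ξ ξ' θ', (ξ', θ') ∈ Kc k d →
      |ψ ξ' θ' + ∑ B : Idx, dXi B ψ ξ' θ' * xiComp (ξ - ξ') B| ≤ C * (1 + ‖ξ - ξ'‖) := by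
  obtain ⟨C, h0, hC⟩ := bdd_Kc hψ.continuousOn k hd
  have hc : ContinuousOn (fderiv ℝ (unc ψ)) Om :=
    hψ.continuousOn_fderiv_of_isOpen isOpen_Om (by norm_num)
  obtain ⟨D, hD⟩ := (Kc_compact k d).exists_bound_of_continuousOn (hc.mono (Kc_sub hd))
  refine ⟨max C D, h0.trans (le_max_left _ _), fun ξ ξ' θ' h' => ?_⟩
  have e := fderiv_split (diffAt_Om three_ne_zero hψ (Kc_sub hd h')) (ξ - ξ') 0
  rw [mul_zero, add_zero] at e
  rw [← e]
  have h1 : |fderiv ℝ (unc ψ) (ξ', θ') (ξ - ξ', 0)| ≤ max C D * ‖ξ - ξ'‖ := by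
    refine ((fderiv ℝ (unc ψ) (ξ', θ')).le_opNorm _).trans ?_
    have : ‖((ξ - ξ', 0) : Xi × ℝ)‖ = ‖ξ - ξ'‖ := by simp [Prod.norm_mk]
    rw [this]
    gcongr
    exact (hD _ h').trans (le_max_right _ _)
  have h2 : |ψ ξ' θ'| ≤ max C D := (hC _ _ h').trans (le_max_left _ _)
  have h3 := abs_add_le (ψ ξ' θ') (fderiv ℝ (unc ψ) (ξ', θ') (ξ - ξ', 0))
  linarith

/-- Region of small temperatures. -/
lemma small_th {ψ : Xi → ℝ → ℝ} (hψ : ContDiffOn ℝ 3 (unc ψ) Om) (hc : PsiConvex ψ) {c : ℝ}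
    (he : ∀ ξ θ, 0 < θ → -c ≤ eHat ψ ξ θ) (k : ℝ) {δ : ℝ} (hδ : 0 < δ) (hk : δ ≤ k) :
    ∃ C, 0 ≤ C ∧ ∀ ξ θ ξ' θ', ‖ξ‖ ≤ k → 0 < θ → θ < δ / 2 → (ξ', θ') ∈ Kc k δ →
      1 ≤ C * I0 ψ ξ θ ξ' θ' ∧ |etaHat ψ ξ θ| ≤ C * I0 ψ ξ θ ξ' θ' ∧
      ∀ B, |dXi B ψ ξ θ| ≤ C := by
  obtain ⟨m, hm, h2⟩ := brB_quad hψ hc k (half_pos hδ)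
  obtain ⟨L, hL0, hL⟩ := lin_bound hψ k hδ
  obtain ⟨P, hP0, hP⟩ := bdd_Kc hψ.continuousOn (k + 1) hδ
  obtain ⟨H, hH0, hH⟩ := bdd_Kc (cd_eta (m := 2) hψ (by norm_num)).continuousOn (k + 1) hδ
  have eta_mono : ∀ ξ θ, 0 < θ → ∀ s, θ < s → etaHat ψ ξ θ ≤ etaHat ψ ξ s := by
    intro ξ θ hθ s hs
    have a1 := brB_nonneg hψ hc ξ hθ (hθ.trans hs)
    have a2 := brB_nonneg hψ hc ξ (hθ.trans hs) hθ
    by_contra hcon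
    push Not at hcon
    nlinarith
  -- bounds on ψ for small θ
  have hub : ∀ ξ θ, ‖ξ‖ ≤ k + 1 → 0 < θ → θ < δ / 2 → ψ ξ θ ≤ P + H * δ := by
    intro ξ θ hξ hθ hθ2
    have hK : (ξ, δ) ∈ Kc (k + 1) δ := mem_Kc.2 ⟨hξ, le_rfl, by linarith⟩
    have a1 := brB_nonneg hψ hc ξ hδ hθ
    have a2 := le_of_abs_le (hP _ _ hK)
    have a3 := le_of_abs_le (hH _ _ hK)
    have : etaHat ψ ξ δ * (δ - θ) ≤ H * δ := by
      calc _ ≤ H * (δ - θ) := by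
            apply mul_le_mul_of_nonneg_right a3; linarith
        _ ≤ H * δ := by apply mul_le_mul_of_nonneg_left _ hH0; linarith
    linarith
  have heta : ∀ ξ θ, ‖ξ‖ ≤ k + 1 → 0 < θ → θ < δ / 2 → etaHat ψ ξ θ ≤ H := by
    intro ξ θ hξ hθ hθ2
    have hK : (ξ, δ) ∈ Kc (k + 1) δ := mem_Kc.2 ⟨hξ, le_rfl, by linarith⟩
    exact (eta_mono ξ θ hθ δ (by linarith)).trans (le_of_abs_le (hH _ _ hK))
  have hlb : ∀ ξ θ, ‖ξ‖ ≤ k + 1 → 0 < θ → θ < δ / 2 → -c - H * δ ≤ ψ ξ θ := by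
    intro ξ θ hξ hθ hθ2
    have a1 := he ξ θ hθ
    have a2 : θ * etaHat ψ ξ θ ≤ H * δ := by
      calc _ ≤ θ * H := mul_le_mul_of_nonneg_left (heta ξ θ hξ hθ hθ2) hθ.le
        _ ≤ H * δ := by rw [mul_comm]; apply mul_le_mul_of_nonneg_left _ hH0; linarith
    have : eHat ψ ξ θ = ψ ξ θ + θ * etaHat ψ ξ θ := by simp only [eHat, etaHat]; ring
    linarith
  set c0 := m * (δ / 2) ^ 2 with hc0
  have hc0pos : 0 < c0 := by positivity
  have hlow : ∀ ξ θ ξ' θ', ‖ξ‖ ≤ k → 0 < θ → θ < δ / 2 → (ξ', θ') ∈ Kc k δ →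
      c0 ≤ I0 ψ ξ θ ξ' θ' := by
    intro ξ θ ξ' θ' hξ hθ hθ2 hK'
    have hK2 := mem_Kc.1 hK'
    have hθ' : 0 < θ' := hδ.trans_le hK2.2.1
    rw [I0_split]
    have a0 := brA_nonneg hψ hc ξ' (ξ - ξ') hθ'
    rw [add_sub_cancel] at a0
    have a1 := h2 ξ (δ / 2) θ' (mem_Kc.2 ⟨hξ, le_rfl, by linarith⟩)
      (mem_Kc.2 ⟨hξ, by linarith, hK2.2.2⟩)
    have a2 := brB_nonneg hψ hc ξ hθ (half_pos hδ)
    have a3 := eta_mono ξ θ hθ (δ / 2) hθ2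
    have a4 : c0 ≤ m * (δ / 2 - θ') ^ 2 := by
      rw [hc0]
      apply mul_le_mul_of_nonneg_left _ hm.le
      nlinarith
    have a5 : 0 ≤ (etaHat ψ ξ (δ / 2) - etaHat ψ ξ θ) * (θ' - δ / 2) :=
      mul_nonneg (by linarith) (by linarith)
    nlinarith
  -- assemble
  set T := P + H * δ + (c + H * δ) with hT
  set K2 := |c| + L * (1 + 2 * k) with hK2def
  have hk0 : 0 ≤ k := hδ.le.trans hk
  have hK20 : 0 ≤ K2 := by positivity
  refine ⟨1 / c0 + (H / c0 + (1 / δ + K2 / δ / c0)) + |T|, by positivity, ?_⟩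
  intro ξ θ ξ' θ' hξ hθ hθ2 hK'
  have hI := hlow ξ θ ξ' θ' hξ hθ hθ2 hK'
  have hI0 : 0 < I0 ψ ξ θ ξ' θ' := hc0pos.trans_le hI
  set I := I0 ψ ξ θ ξ' θ' with hIdef
  have i1 : 1 ≤ 1 / c0 * I := by
    rw [one_div_mul_eq_div, le_div_iff₀ hc0pos]; linarith
  have q1 : 0 ≤ H / c0 * I := by positivity
  have q2 : 0 ≤ 1 / δ * I := by positivity
  have q3 : 0 ≤ K2 / δ / c0 * I := by positivity
  have q4 : 0 ≤ |T| * I := by positivity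
  have q5 : 0 ≤ 1 / c0 * I := by positivity
  refine ⟨by nlinarith, ?_, ?_⟩
  · have key : |etaHat ψ ξ θ| ≤ H + (I + K2) / δ := by
      have r0 : 0 ≤ (I + K2) / δ := by positivity
      rcases le_total 0 (etaHat ψ ξ θ) with hs | hs
      · rw [abs_of_nonneg hs]
        linarith [heta ξ θ (by linarith) hθ hθ2]
      · rw [abs_of_nonpos hs]
        have hK2' := mem_Kc.1 hK'
        have b1 := I0_eq ψ ξ θ ξ' θ'
        have b2 := he ξ θ hθ
        have b3 := le_of_abs_le (hL ξ ξ' θ' hK')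
        have b4 : ‖ξ - ξ'‖ ≤ 2 * k := by linarith [norm_sub_le ξ ξ', hK2'.1]
        have b5 : L * (1 + ‖ξ - ξ'‖) ≤ L * (1 + 2 * k) := by gcongr
        have b6 : δ * -etaHat ψ ξ θ ≤ θ' * -etaHat ψ ξ θ :=
          mul_le_mul_of_nonneg_right hK2'.2.1 (by linarith)
        have b7 : -etaHat ψ ξ θ ≤ (I + K2) / δ := by
          rw [le_div_iff₀ hδ]
          linarith [le_abs_self c]
        linarith
    have s1 : H ≤ H / c0 * I := by
      have := mul_le_mul_of_nonneg_left i1 hH0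
      calc H = H * 1 := by ring
        _ ≤ _ := this
        _ = _ := by ring
    have s2 : K2 / δ ≤ K2 / δ / c0 * I := by
      have := mul_le_mul_of_nonneg_left i1 (div_nonneg hK20 hδ.le)
      calc K2 / δ = K2 / δ * 1 := by ring
        _ ≤ _ := this
        _ = _ := by ring
    have s3 : (I + K2) / δ = 1 / δ * I + K2 / δ := by ring
    rw [s3] at key
    nlinarith
  · intro B
    have hn := norm_eB_le B
    have b0 := brA_nonneg hψ hc ξ (eB B) hθ
    have b1 := brA_nonneg hψ hc ξ (-eB B) hθ
    have e0 : ∑ A : Idx, dXi A ψ ξ θ * xiComp (eB B) A = dXi B ψ ξ θ := by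
      simp only [xiComp_eB, mul_ite, mul_one, mul_zero, Finset.sum_ite_eq', Finset.mem_univ,
        if_true]
    have e1 : ∑ A : Idx, dXi A ψ ξ θ * xiComp (-eB B) A = -dXi B ψ ξ θ := by
      rw [← e0, ← Finset.sum_neg_distrib]
      refine Finset.sum_congr rfl fun A _ => ?_
      rw [← neg_one_smul ℝ (eB B), xiComp_smul]; ring
    rw [e0] at b0
    rw [e1] at b1
    have u0 := hub (ξ + eB B) θ ((norm_add_le _ _).trans (by linarith)) hθ hθ2
    have u1 := hub (ξ + -eB B) θ ((norm_add_le _ _).trans (by rw [norm_neg]; linarith)) hθ hθ2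
    have l0 := hlb ξ θ (by linarith) hθ hθ2
    have hh : |dXi B ψ ξ θ| ≤ T := by
      rw [abs_le]; constructor <;> linarith
    have z1 : 0 ≤ 1 / c0 + (H / c0 + (1 / δ + K2 / δ / c0)) := by positivity
    linarith [le_abs_self T]

/-! ### Growth at infinity -/

lemma eps_pow {p : ℝ} (hp : 1 < p) {ε : ℝ} (hε : 0 < ε) :
    ∃ C, 0 ≤ C ∧ ∀ x : ℝ, 0 ≤ x → x ≤ ε * x ^ p + C := by
  have hC : 0 ≤ (1 / ε) ^ (1 / (p - 1)) := by positivity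
  refine ⟨(1 / ε) ^ (1 / (p - 1)), hC, fun x hx => ?_⟩
  rcases le_or_gt x ((1 / ε) ^ (1 / (p - 1))) with h | h
  · have : 0 ≤ ε * x ^ p := by positivity
    linarith
  · have hx0 : 0 < x := hC.trans_lt h
    have h1 : ((1 / ε) ^ (1 / (p - 1))) ^ (p - 1) ≤ x ^ (p - 1) :=
      Real.rpow_le_rpow hC h.le (by linarith)
    rw [← Real.rpow_mul (by positivity), one_div_mul_cancel (by linarith), Real.rpow_one] at h1
    have h2 : x ^ p = x ^ (p - 1) * x := by
      rw [← Real.rpow_add_one hx0.ne']; congr 1; ring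
    have h3 : 1 ≤ ε * x ^ (p - 1) := by
      have := mul_le_mul_of_nonneg_left h1 hε.le
      rwa [mul_one_div_cancel hε.ne'] at this
    have h4 : x ≤ ε * x ^ p := by
      rw [h2]; nlinarith
    linarith

lemma mnorm_nonneg (F : Mat3) : 0 ≤ mnorm F := Real.sqrt_nonneg _

lemma abs_le_sqrt_sum (a : Fin 3 → Fin 3 → ℝ) (i j : Fin 3) :
    |a i j| ≤ Real.sqrt (∑ i, ∑ j, (a i j)^2) := by
  rw [← Real.sqrt_sq_eq_abs]
  apply Real.sqrt_le_sqrt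
  have h1 : (a i j)^2 ≤ ∑ j, (a i j)^2 :=
    Finset.single_le_sum (f := fun j => (a i j)^2) (fun j _ => sq_nonneg _) (Finset.mem_univ j)
  have h2 : ∑ j, (a i j)^2 ≤ ∑ i, ∑ j, (a i j)^2 :=
    Finset.single_le_sum (f := fun i => ∑ j, (a i j)^2)
      (fun i _ => Finset.sum_nonneg fun j _ => sq_nonneg _) (Finset.mem_univ i)
  exact h1.trans h2

lemma norm_le_mnorm (F : Mat3) : ‖F‖ ≤ mnorm F := by
  refine (pi_norm_le_iff_of_nonneg (mnorm_nonneg F)).2 fun i => ?_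
  refine (pi_norm_le_iff_of_nonneg (mnorm_nonneg F)).2 fun j => ?_
  exact abs_le_sqrt_sum F i j

def NN (p q r ℓ : ℝ) (ξ : Xi) (θ : ℝ) : ℝ := xiNorm p q r ξ + θ ^ ℓ

lemma le_one_add_rpow {x p : ℝ} (hx : 0 ≤ x) (hp : 1 ≤ p) : x ≤ max 1 (x ^ p) := by
  rcases le_total x 1 with h | h
  · exact h.trans (le_max_left _ _)
  · exact (Real.self_le_rpow_of_one_le h hp).trans (le_max_right _ _)

lemma NN_parts {p q r ℓ : ℝ} (ξ : Xi) {θ : ℝ} (hθ : 0 < θ) :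
    0 ≤ mnorm ξ.1 ^ p ∧ 0 ≤ mnorm ξ.2.1 ^ q ∧ 0 ≤ |ξ.2.2| ^ r ∧ 0 ≤ θ ^ ℓ :=
  ⟨Real.rpow_nonneg (mnorm_nonneg _) _, Real.rpow_nonneg (mnorm_nonneg _) _,
    Real.rpow_nonneg (abs_nonneg _) _, Real.rpow_nonneg hθ.le _⟩

lemma NN_def (p q r ℓ : ℝ) (ξ : Xi) (θ : ℝ) :
    NN p q r ℓ ξ θ = mnorm ξ.1 ^ p + mnorm ξ.2.1 ^ q + |ξ.2.2| ^ r + θ ^ ℓ := rfl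

lemma NN_nonneg {p q r ℓ : ℝ} (ξ : Xi) {θ : ℝ} (hθ : 0 < θ) : 0 ≤ NN p q r ℓ ξ θ := by
  obtain ⟨h1, h2, h3, h4⟩ := NN_parts (p := p) (q := q) (r := r) (ℓ := ℓ) ξ hθ
  rw [NN_def]; linarith

lemma NN_bound {p q r ℓ : ℝ} (hp : 1 ≤ p) (hq : 1 ≤ q) (hr : 1 ≤ r) (hl : 1 ≤ ℓ)
    (ξ : Xi) {θ : ℝ} (hθ : 0 < θ) {R : ℝ} (hR : 1 ≤ R) (h : NN p q r ℓ ξ θ ≤ R) :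
    ‖ξ‖ ≤ R ∧ θ ≤ R := by
  obtain ⟨h1, h2, h3, h4⟩ := NN_parts (p := p) (q := q) (r := r) (ℓ := ℓ) ξ hθ
  rw [NN_def] at h
  refine ⟨?_, (le_one_add_rpow hθ.le hl).trans (max_le hR (by linarith))⟩
  rw [Prod.norm_def, Prod.norm_def]
  refine max_le ?_ (max_le ?_ ?_)
  · exact (norm_le_mnorm _).trans ((le_one_add_rpow (mnorm_nonneg _) hp).trans
      (max_le hR (by linarith)))
  · exact (norm_le_mnorm _).trans ((le_one_add_rpow (mnorm_nonneg _) hq).trans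
      (max_le hR (by linarith)))
  · exact (le_one_add_rpow (abs_nonneg _) hr).trans (max_le hR (by linarith))

lemma le_of_rpow_le {x y s t : ℝ} (hx : 0 ≤ x) (hs : 0 < s) (h : x ^ s ≤ y)
    (hst : s * t = 1) : x ≤ y ^ t := by
  have ht : 0 < t := by
    by_contra hcon
    nlinarith
  calc x = (x ^ s) ^ t := by rw [← Real.rpow_mul hx, hst, Real.rpow_one]
    _ ≤ y ^ t := Real.rpow_le_rpow (Real.rpow_nonneg hx _) h ht.le

lemma norm_xi_le (ξ : Xi) : ‖ξ‖ ≤ mnorm ξ.1 + mnorm ξ.2.1 + |ξ.2.2| := by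
  have h1 := mnorm_nonneg ξ.1
  have h2 := mnorm_nonneg ξ.2.1
  have h3 := abs_nonneg ξ.2.2
  rw [Prod.norm_def, Prod.norm_def]
  refine max_le ?_ (max_le ?_ ?_)
  · linarith [norm_le_mnorm ξ.1]
  · linarith [norm_le_mnorm ξ.2.1]
  · rw [Real.norm_eq_abs]; linarith

/-- Region of large states. -/
lemma big {ψ : Xi → ℝ → ℝ} (hψ : ContDiffOn ℝ 3 (unc ψ) Om) {c p q r ℓ : ℝ}
    (hgrow : GrowthCond ψ c p q r ℓ)
    (hp : 4 ≤ p) (hq : 1 < q) (hr : 1 < r) {M δ : ℝ} (hM : 0 < M) (hδ : 0 < δ) :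
    ∃ R C, 1 ≤ R ∧ 0 ≤ C ∧ ∀ ξ θ ξ' θ', 0 < θ → R < NN p q r ℓ ξ θ → (ξ', θ') ∈ Kc M δ →
      1 + NN p q r ℓ ξ θ ≤ C * I0 ψ ξ θ ξ' θ' ∧
      |etaHat ψ ξ θ| ≤ C * I0 ψ ξ θ ξ' θ' ∧
      (∀ i α, |dXi (.inl (i, α)) ψ ξ θ| ≤ 1 + NN p q r ℓ ξ θ) ∧
      (∀ i α, |dXi (.inr (.inl (i, α))) ψ ξ θ|
        ≤ ((1 + NN p q r ℓ ξ θ) ^ (1 / p)) ^ (p - 1)) ∧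
      (∀ u, |dXi (.inr (.inr u)) ψ ξ θ| ≤ ((1 + NN p q r ℓ ξ θ) ^ (1 / p)) ^ (p - 2)) := by
  obtain ⟨hc, hg1, hg2, hg3⟩ := hgrow
  obtain ⟨L, hL0, hL⟩ := lin_bound hψ M hδ
  have hε : 0 < c / (4 * (L + 1)) := by positivity
  obtain ⟨Cp, hCp0, hCp⟩ := eps_pow (by linarith : 1 < p) hε
  obtain ⟨Cq, hCq0, hCq⟩ := eps_pow hq hε
  obtain ⟨Cr, hCr0, hCr⟩ := eps_pow hr hε
  obtain ⟨R1, hR1⟩ := hg3 (c / (4 * M)) (by positivity)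
  obtain ⟨R2, hR2⟩ := hg2 1 one_pos
  obtain ⟨R3, hR3⟩ := hg3 1 one_pos
  set K := L * (1 + M + (Cp + Cq + Cr)) with hK
  have hK0 : 0 ≤ K := by positivity
  set R4 := 1 + 4 * (c + K) / c with hR4
  have hR41 : 1 ≤ R4 := by
    have : 0 ≤ 4 * (c + K) / c := by positivity
    linarith
  refine ⟨max (max R1 R2) (max R3 R4), 8 / c, hR41.trans ((le_max_right _ _).trans
    (le_max_right _ _)), by positivity, ?_⟩
  intro ξ θ ξ' θ' hθ hN hK'
  set N := NN p q r ℓ ξ θ with hNdef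
  have hN1 : R1 < N := ((le_max_left _ _).trans (le_max_left _ _)).trans_lt hN
  have hN2 : R2 < N := ((le_max_right _ _).trans (le_max_left _ _)).trans_lt hN
  have hN3 : R3 < N := ((le_max_left _ _).trans (le_max_right _ _)).trans_lt hN
  have hN4 : R4 < N := ((le_max_right _ _).trans (le_max_right _ _)).trans_lt hN
  have hNone : 1 ≤ N := hR41.trans hN4.le
  obtain ⟨t1, t2, t3, t4⟩ := NN_parts (p := p) (q := q) (r := r) (ℓ := ℓ) ξ hθ
  have hNe : N = mnorm ξ.1 ^ p + mnorm ξ.2.1 ^ q + |ξ.2.2| ^ r + θ ^ ℓ := rfl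
  have hK2 := mem_Kc.1 hK'
  have e0 : eHat ψ ξ θ ≥ c * N - c := (hg1 ξ θ hθ).1
  have e1 : |dTh ψ ξ θ| ≤ c / (4 * M) * N := hR1 ξ θ hθ hN1
  have e2 := hR2 ξ θ hθ hN2
  have e3 : |dTh ψ ξ θ| ≤ 1 * N := hR3 ξ θ hθ hN3
  have he1 : |etaHat ψ ξ θ| = |dTh ψ ξ θ| := abs_neg _
  have f1 : θ' * etaHat ψ ξ θ ≤ c / 4 * N := by
    have hθ' : 0 < θ' := hδ.trans_le hK2.2.1
    calc θ' * etaHat ψ ξ θ ≤ θ' * |etaHat ψ ξ θ| :=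
          mul_le_mul_of_nonneg_left (le_abs_self _) hθ'.le
      _ ≤ M * (c / (4 * M) * N) := by
          rw [he1]
          exact mul_le_mul hK2.2.2 e1 (abs_nonneg _) hM.le
      _ = c / 4 * N := by field_simp
  have f2 : L * (1 + ‖ξ - ξ'‖) ≤ c / 4 * N + K := by
    have g1 : ‖ξ - ξ'‖ ≤ ‖ξ‖ + M := (norm_sub_le _ _).trans (by linarith [hK2.1])
    have g2 := norm_xi_le ξ
    have g3 := hCp _ (mnorm_nonneg ξ.1)
    have g4 := hCq _ (mnorm_nonneg ξ.2.1)
    have g5 := hCr _ (abs_nonneg ξ.2.2)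
    have g6 : ‖ξ - ξ'‖ ≤ c / (4 * (L + 1)) * N + (Cp + Cq + Cr) + M := by
      have : 0 ≤ c / (4 * (L + 1)) * θ ^ ℓ := by positivity
      rw [hNe]; linarith
    have g7 : L * (c / (4 * (L + 1)) * N) ≤ c / 4 * N := by
      have : L * (c / (4 * (L + 1)) * N) = (L / (L + 1)) * (c / 4 * N) := by field_simp
      rw [this]
      apply mul_le_of_le_one_left (by positivity)
      rw [div_le_one (by positivity)]; linarith
    have g8 := mul_le_mul_of_nonneg_left g6 hL0
    rw [hK]; linarith
  have f3 := le_of_abs_le (hL ξ ξ' θ' hK')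
  have f4 : c + K ≤ c / 4 * N := by
    have : 4 * (c + K) / c ≤ N := by linarith
    rw [div_le_iff₀ hc] at this
    linarith
  have f5 : c / 4 * N ≤ I0 ψ ξ θ ξ' θ' := by
    rw [I0_eq]; linarith
  have f6 : 1 + N ≤ 8 / c * I0 ψ ξ θ ξ' θ' := by
    calc 1 + N ≤ 2 * N := by linarith
      _ = 8 / c * (c / 4 * N) := by field_simp; ring
      _ ≤ _ := by gcongr
  have gF : 0 ≤ gradFnorm ψ ξ θ := Real.sqrt_nonneg _
  have gZ : 0 ≤ gradZnorm ψ ξ θ := Real.sqrt_nonneg _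
  have gW : 0 ≤ gradWnorm ψ ξ θ := abs_nonneg _
  have gZ' : 0 ≤ gradZnorm ψ ξ θ ^ (p/(p-1)) := Real.rpow_nonneg gZ _
  have gW' : 0 ≤ gradWnorm ψ ξ θ ^ (p/(p-2)) := Real.rpow_nonneg gW _
  have e2' : gradFnorm ψ ξ θ + gradZnorm ψ ξ θ ^ (p/(p-1)) + gradWnorm ψ ξ θ ^ (p/(p-2))
      ≤ N := by
    have : 1 * (xiNorm p q r ξ + θ ^ ℓ) = N := one_mul _
    rwa [this] at e2
  have hp0 : p ≠ 0 := by linarith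
  have hp1 : p - 1 ≠ 0 := by linarith
  have hp2 : p - 2 ≠ 0 := by linarith
  have hW0 : 0 ≤ 1 + N := by linarith
  refine ⟨f6, ?_, ?_, ?_, ?_⟩
  · rw [he1]; linarith
  · intro i α
    have := abs_le_sqrt_sum (fun i α => dXi (.inl (i, α)) ψ ξ θ) i α
    have h2 : |dXi (.inl (i, α)) ψ ξ θ| ≤ gradFnorm ψ ξ θ := this
    linarith
  · intro i α
    have := abs_le_sqrt_sum (fun i α => dXi (.inr (.inl (i, α))) ψ ξ θ) i α
    have h2 : |dXi (.inr (.inl (i, α))) ψ ξ θ| ≤ gradZnorm ψ ξ θ := this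
    refine h2.trans ?_
    rw [← Real.rpow_mul hW0]
    refine le_of_rpow_le gZ (s := p / (p - 1)) (div_pos (by linarith) (by linarith))
      (by linarith) ?_
    field_simp
  · intro u
    have h2 : |dXi (.inr (.inr u)) ψ ξ θ| ≤ gradWnorm ψ ξ θ := le_rfl
    refine h2.trans ?_
    rw [← Real.rpow_mul hW0]
    refine le_of_rpow_le gW (s := p / (p - 2)) (div_pos (by linarith) (by linarith))
      (by linarith) ?_
    field_simp

/-- Dichotomy: either near (compact set) or far, with all bounds. -/
lemma far {ψ : Xi → ℝ → ℝ} (hψ : ContDiffOn ℝ 3 (unc ψ) Om) (hcv : PsiConvex ψ) {c p q r ℓ : ℝ}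
    (hgrow : GrowthCond ψ c p q r ℓ)
    (hp : 4 ≤ p) (hq : 1 < q) (hr : 1 < r) (hl : 1 < ℓ) {M δ : ℝ} (hM : 0 < M) (hδ : 0 < δ)
    (hδM : δ ≤ M) :
    ∃ k C, M ≤ k ∧ 0 ≤ C ∧ ∀ ξ θ ξ' θ', 0 < θ → (ξ', θ') ∈ Kc M δ →
      (ξ, θ) ∈ Kc k (δ / 2) ∨
      (1 + NN p q r ℓ ξ θ ≤ C * I0 ψ ξ θ ξ' θ' ∧
      |etaHat ψ ξ θ| ≤ C * I0 ψ ξ θ ξ' θ' ∧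
      (∀ i α, |dXi (.inl (i, α)) ψ ξ θ| ≤ C * (1 + NN p q r ℓ ξ θ)) ∧
      (∀ i α, |dXi (.inr (.inl (i, α))) ψ ξ θ|
        ≤ C * ((1 + NN p q r ℓ ξ θ) ^ (1 / p)) ^ (p - 1)) ∧
      (∀ u, |dXi (.inr (.inr u)) ψ ξ θ|
        ≤ C * ((1 + NN p q r ℓ ξ θ) ^ (1 / p)) ^ (p - 2))) := by
  obtain ⟨R, C1, hR1, hC10, h1⟩ := big hψ hgrow hp hq hr hM hδ
  have he : ∀ ξ θ, 0 < θ → -c ≤ eHat ψ ξ θ := by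
    intro ξ θ hθ
    have a := (hgrow.2.1 ξ θ hθ).1
    have b : 0 ≤ c * (xiNorm p q r ξ + θ ^ ℓ) :=
      mul_nonneg hgrow.1.le (NN_nonneg (p := p) (q := q) (r := r) (ℓ := ℓ) ξ hθ)
    linarith
  obtain ⟨C2, hC20, h2⟩ := small_th hψ hcv he (max M R) hδ (hδM.trans (le_max_left _ _))
  refine ⟨max M R, C1 + C2 * (1 + R) + 1, le_max_left _ _, by positivity, ?_⟩
  intro ξ θ ξ' θ' hθ hK'
  set N := NN p q r ℓ ξ θ with hN
  have hN0 : 0 ≤ N := NN_nonneg ξ hθ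
  have ha1 : 1 ≤ (1 + N) ^ (1 / p) := Real.one_le_rpow (by linarith) (by positivity)
  have ha2 : 1 ≤ ((1 + N) ^ (1 / p)) ^ (p - 1) := Real.one_le_rpow ha1 (by linarith)
  have ha3 : 1 ≤ ((1 + N) ^ (1 / p)) ^ (p - 2) := Real.one_le_rpow ha1 (by linarith)
  have hCC : 0 ≤ C2 * (1 + R) := by positivity
  have hCR : C2 ≤ C2 * (1 + R) := by nlinarith
  rcases lt_or_ge R N with hRN | hRN
  · right
    obtain ⟨a, b, c1, d, e⟩ := h1 ξ θ ξ' θ' hθ hRN hK'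
    have hI : 0 ≤ I0 ψ ξ θ ξ' θ' := by
      by_contra hcon
      nlinarith
    refine ⟨a.trans ?_, b.trans ?_, fun i α => (c1 i α).trans ?_, fun i α => (d i α).trans ?_,
      fun u => (e u).trans ?_⟩
    · apply mul_le_mul_of_nonneg_right _ hI; linarith
    · apply mul_le_mul_of_nonneg_right _ hI; linarith
    · apply le_mul_of_one_le_left (by linarith); linarith
    · apply le_mul_of_one_le_left (by linarith); linarith
    · apply le_mul_of_one_le_left (by linarith); linarith
  · obtain ⟨n1, n2⟩ := NN_bound (by linarith) hq.le hr.le hl.le ξ hθ hR1 hRN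
    rcases le_or_gt (δ / 2) θ with hs | hs
    · left
      exact mem_Kc.2 ⟨n1.trans (le_max_right _ _), hs, n2.trans (le_max_right _ _)⟩
    · right
      have hm := mem_Kc.1 hK'
      obtain ⟨a, b, d⟩ := h2 ξ θ ξ' θ' (n1.trans (le_max_right _ _)) hθ hs
        (mem_Kc.2 ⟨hm.1.trans (le_max_left _ _), hm.2.1, hm.2.2.trans (le_max_left _ _)⟩)
      have hI : 0 ≤ I0 ψ ξ θ ξ' θ' := by
        by_contra hcon
        nlinarith
      have hbd : ∀ x : ℝ, 1 ≤ x → C2 ≤ (C1 + C2 * (1 + R) + 1) * x := by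
        intro x hx
        calc C2 ≤ (C1 + C2 * (1 + R) + 1) * 1 := by linarith
          _ ≤ _ := by gcongr
      refine ⟨?_, b.trans ?_, fun i α => (d _).trans (hbd _ (by linarith)),
        fun i α => (d _).trans (hbd _ ha2), fun u => (d _).trans (hbd _ ha3)⟩
      · have := mul_le_mul_of_nonneg_left a (by linarith : 0 ≤ 1 + R)
        have q1 : 0 ≤ C1 * I0 ψ ξ θ ξ' θ' := mul_nonneg hC10 hI
        nlinarith
      · apply mul_le_mul_of_nonneg_right _ hI; linarith

/-! ### Final bounds -/

/-- The four quantities are controlled by `T`. -/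
def Ctrl (ψ : Xi → ℝ → ℝ) (ξ : Xi) (θ : ℝ) (ξ' : Xi) (θ' : ℝ) (T : ℝ) : Prop :=
  |relQ (etaHat ψ) ξ θ ξ' θ'| ≤ T ∧ (∀ B, |relQ (dXi B ψ) ξ θ ξ' θ'| ≤ T) ∧
  (∀ B i α, |(dPhi B i α ξ.1 - dPhi B i α ξ'.1) * (dXi B ψ ξ θ - dXi B ψ ξ' θ')| ≤ T) ∧
  (∀ B i α, (dPhi B i α ξ.1 - dPhi B i α ξ'.1) ^ 2 ≤ T)

lemma Ctrl.mono {ψ : Xi → ℝ → ℝ} {ξ : Xi} {θ : ℝ} {ξ' : Xi} {θ' T T' : ℝ}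
    (h : Ctrl ψ ξ θ ξ' θ' T) (hT : T ≤ T') : Ctrl ψ ξ θ ξ' θ' T' :=
  ⟨h.1.trans hT, fun B => (h.2.1 B).trans hT, fun B i α => (h.2.2.1 B i α).trans hT,
    fun B i α => (h.2.2.2 B i α).trans hT⟩

lemma dPhi_near {k : ℝ} {F F' : Mat3} (hF : ‖F‖ ≤ k) (hF' : ‖F'‖ ≤ k) (B : Idx) (i α : Fin 3) :
    |dPhi B i α F - dPhi B i α F'| ≤ (81 + 729 * (2 * k)) * ‖F - F'‖ := by
  have hk : 0 ≤ k := (norm_nonneg _).trans hF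
  have h0 := norm_nonneg (F - F')
  have h1 : 0 ≤ k * ‖F - F'‖ := by positivity
  rcases B with ⟨a, b⟩ | ⟨a, b⟩ | u
  · rw [dPhi_F, dPhi_F, sub_self, abs_zero]; positivity
  · have := dPhi_cof_diff a b i α F F'
    linarith
  · have := dPhi_det_diff i α F F' u
    have h2 : ‖F - F'‖ * (‖F‖ + ‖F'‖) ≤ ‖F - F'‖ * (2 * k) := by gcongr; linarith
    linarith

lemma ctrl_near {ψ : Xi → ℝ → ℝ} (hψ : ContDiffOn ℝ 3 (unc ψ) Om) (hcv : PsiConvex ψ)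
    {k : ℝ} (hk : 0 ≤ k) {d : ℝ} (hd : 0 < d) :
    ∃ C, 0 ≤ C ∧ ∀ ξ θ ξ' θ', (ξ, θ) ∈ Kc k d → (ξ', θ') ∈ Kc k d →
      Ctrl ψ ξ θ ξ' θ' (C * I0 ψ ξ θ ξ' θ') := by
  obtain ⟨Cn, hCn0, hCn⟩ := near_lower hψ hcv k hd
  obtain ⟨Ce, hCe0, hCe⟩ := relQ_near (cd_eta (m := 2) hψ (by norm_num)) k hd
  choose Cx hCx0 hCx using fun B => relQ_near (cd_dXi (m := 2) hψ (by norm_num) B) k hd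
  choose L hL0 hL using fun B => lip_Kc (cd_dXi (m := 1) hψ (by norm_num) B) k hd
  set P : ℝ := 81 + 729 * (2 * k) with hP
  have hP0 : 0 ≤ P := by positivity
  have hsx : ∀ B, Cx B ≤ ∑ B, Cx B := fun B =>
    Finset.single_le_sum (f := Cx) (fun B _ => hCx0 B) (Finset.mem_univ B)
  have hsl : ∀ B, L B ≤ ∑ B, L B := fun B =>
    Finset.single_le_sum (f := L) (fun B _ => hL0 B) (Finset.mem_univ B)
  have hx0 : 0 ≤ ∑ B, Cx B := Finset.sum_nonneg fun B _ => hCx0 B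
  have hl0 : 0 ≤ ∑ B, L B := Finset.sum_nonneg fun B _ => hL0 B
  set X := ∑ B, Cx B
  set Y := ∑ B, L B
  have hPY : 0 ≤ P * Y := mul_nonneg hP0 hl0
  refine ⟨(Ce + X + P * Y + P ^ 2) * Cn, by positivity, fun ξ θ ξ' θ' hK hK' => ?_⟩
  have hmain := hCn ξ θ ξ' θ' hK hK'
  set D := ‖((ξ, θ) : Xi × ℝ) - (ξ', θ')‖ with hD
  have hD0 : 0 ≤ D := norm_nonneg _
  have hFD : ‖ξ.1 - ξ'.1‖ ≤ D :=
    (norm_fst_le (ξ - ξ')).trans (norm_fst_le (((ξ, θ) : Xi × ℝ) - (ξ', θ')))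
  have hphi : ∀ B i α, |dPhi B i α ξ.1 - dPhi B i α ξ'.1| ≤ P * D := fun B i α =>
    (dPhi_near ((norm_fst_le ξ).trans (mem_Kc.1 hK).1)
      ((norm_fst_le ξ').trans (mem_Kc.1 hK').1) B i α).trans (by gcongr)
  have hdx : ∀ B, |dXi B ψ ξ θ - dXi B ψ ξ' θ'| ≤ Y * D := fun B =>
    (hL B _ hK _ hK').trans (by gcongr; exact hsl B)
  have hS : ∀ S, S ≤ Ce + X + P * Y + P ^ 2 →
      S * D ^ 2 ≤ (Ce + X + P * Y + P ^ 2) * Cn * I0 ψ ξ θ ξ' θ' := by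
    intro S hS
    calc S * D ^ 2 ≤ (Ce + X + P * Y + P ^ 2) * D ^ 2 := by gcongr
      _ ≤ (Ce + X + P * Y + P ^ 2) * (Cn * I0 ψ ξ θ ξ' θ') := by gcongr
      _ = _ := by ring
  refine ⟨?_, fun B => ?_, fun B i α => ?_, fun B i α => ?_⟩
  · refine (hCe ξ θ ξ' θ' hK hK').trans (hS _ ?_)
    nlinarith [sq_nonneg P]
  · refine (hCx B ξ θ ξ' θ' hK hK').trans (hS _ ?_)
    nlinarith [sq_nonneg P, hsx B]
  · rw [abs_mul]
    calc _ ≤ (P * D) * (Y * D) := mul_le_mul (hphi B i α) (hdx B) (abs_nonneg _) (by positivity)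
      _ = P * Y * D ^ 2 := by ring
      _ ≤ _ := hS _ (by nlinarith [sq_nonneg P])
  · rw [← sq_abs]
    calc _ ≤ (P * D) ^ 2 := by gcongr; exact hphi B i α
      _ = P ^ 2 * D ^ 2 := by ring
      _ ≤ _ := hS _ (by linarith)

set_option maxHeartbeats 2000000 in
lemma ctrl_far {ψ : Xi → ℝ → ℝ} (hψ : ContDiffOn ℝ 3 (unc ψ) Om) {p q r ℓ : ℝ}
    (hp : 4 ≤ p) (hq : 1 < q) (hr : 1 < r) (hl : 1 < ℓ) {M δ : ℝ} (hM : 0 < M) (hδ : 0 < δ)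
    {C : ℝ} (hC : 0 ≤ C) :
    ∃ C', 0 ≤ C' ∧ ∀ ξ θ ξ' θ', 0 < θ → (ξ', θ') ∈ Kc M δ →
      (1 + NN p q r ℓ ξ θ ≤ C * I0 ψ ξ θ ξ' θ' ∧
      |etaHat ψ ξ θ| ≤ C * I0 ψ ξ θ ξ' θ' ∧
      (∀ i α, |dXi (.inl (i, α)) ψ ξ θ| ≤ C * (1 + NN p q r ℓ ξ θ)) ∧
      (∀ i α, |dXi (.inr (.inl (i, α))) ψ ξ θ|
        ≤ C * ((1 + NN p q r ℓ ξ θ) ^ (1 / p)) ^ (p - 1)) ∧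
      (∀ u, |dXi (.inr (.inr u)) ψ ξ θ|
        ≤ C * ((1 + NN p q r ℓ ξ θ) ^ (1 / p)) ^ (p - 2))) →
      Ctrl ψ ξ θ ξ' θ' (C' * I0 ψ ξ θ ξ' θ') := by
  obtain ⟨Ce, hCe0, hCe⟩ := relQ_far (cd_eta (m := 2) hψ (by norm_num)) M hδ
  choose Cx hCx0 hCx using fun B => relQ_far (cd_dXi (m := 2) hψ (by norm_num) B) M hδ
  choose L hL0 hL using fun B => bdd_Kc (cd_dXi (m := 1) hψ (by norm_num) B).continuousOn M hδ
  have hsx : ∀ B, Cx B ≤ ∑ B, Cx B := fun B =>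
    Finset.single_le_sum (f := Cx) (fun B _ => hCx0 B) (Finset.mem_univ B)
  have hsl : ∀ B, L B ≤ ∑ B, L B := fun B =>
    Finset.single_le_sum (f := L) (fun B _ => hL0 B) (Finset.mem_univ B)
  have hx0 : 0 ≤ ∑ B, Cx B := Finset.sum_nonneg fun B _ => hCx0 B
  have hl0 : 0 ≤ ∑ B, L B := Finset.sum_nonneg fun B _ => hL0 B
  set X := ∑ B, Cx B
  set Y := ∑ B, L B
  set m := 1 + M with hm
  have hm1 : 1 ≤ m := by linarith
  set S := C + (Ce + X) * (1 + 2 * m) + (81 * m + 729 * m ^ 2) * (C + Y)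
    + (81 * m + 729 * m ^ 2) ^ 2 with hSdef
  have hS0 : 0 ≤ S := by positivity
  refine ⟨C + S * C, by positivity, ?_⟩
  rintro ξ θ ξ' θ' hθ hK' ⟨hW, heta, hdF, hdZ, hdW⟩
  have hN0 : 0 ≤ NN p q r ℓ ξ θ := NN_nonneg ξ hθ
  obtain ⟨nξ, nθ⟩ := NN_bound (R := 1 + NN p q r ℓ ξ θ) (by linarith : 1 ≤ p) hq.le hr.le hl.le
    ξ hθ (by linarith) (by linarith)
  set W := 1 + NN p q r ℓ ξ θ with hWdef
  set a := W ^ (1 / p) with ha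
  have hW1 : 1 ≤ W := by linarith
  have hp0 : 0 < p := by linarith
  have ha1 : 1 ≤ a := Real.one_le_rpow hW1 (by positivity)
  have ha0 : 0 < a := by linarith
  have hap : a ^ p = W := by
    rw [ha, ← Real.rpow_mul (by linarith), one_div_mul_cancel hp0.ne', Real.rpow_one]
  have haz : a * a ^ (p - 1) = W := by
    rw [← hap, mul_comm, ← Real.rpow_add_one ha0.ne']; congr 1; ring
  have haw : a ^ 2 * a ^ (p - 2) = W := by
    rw [← hap, ← Real.rpow_natCast, ← Real.rpow_add ha0]; congr 1; push_cast; ring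
  have ha4 : a ^ 4 ≤ W := by
    rw [← hap, ← Real.rpow_natCast]
    exact Real.rpow_le_rpow_of_exponent_le ha1 (by push_cast; linarith)
  have haz1 : 1 ≤ a ^ (p - 1) := Real.one_le_rpow ha1 (by linarith)
  have haw1 : 1 ≤ a ^ (p - 2) := Real.one_le_rpow ha1 (by linarith)
  have hazW : a ^ (p - 1) ≤ W := by
    rw [← haz]; exact le_mul_of_one_le_left (by linarith) ha1
  have hawW : a ^ (p - 2) ≤ W := by
    rw [← haw]; exact le_mul_of_one_le_left (by linarith) (one_le_pow₀ ha1)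
  have hFa : ‖ξ.1‖ ≤ a := by
    refine (norm_le_mnorm _).trans ?_
    refine le_of_rpow_le (mnorm_nonneg _) hp0 ?_ (mul_one_div_cancel hp0.ne')
    obtain ⟨h1, h2, h3, h4⟩ := NN_parts (p := p) (q := q) (r := r) (ℓ := ℓ) ξ hθ
    rw [hWdef, NN_def]; linarith
  have hmem := mem_Kc.1 hK'
  have hF' : ‖ξ'.1‖ ≤ M := (norm_fst_le ξ').trans hmem.1
  have hFF : ‖ξ.1‖ + ‖ξ'.1‖ ≤ m * a := by
    have : M ≤ M * a := le_mul_of_one_le_right hM.le ha1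
    rw [hm]; linarith
  have hFd : ‖ξ.1 - ξ'.1‖ ≤ m * a := (norm_sub_le _ _).trans hFF
  have hθ' : 0 < θ' := hδ.trans_le hmem.2.1
  have hI : 0 ≤ I0 ψ ξ θ ξ' θ' := by
    by_contra hcon
    nlinarith
  have hdist : 1 + ‖((ξ, θ) : Xi × ℝ) - (ξ', θ')‖ ≤ (1 + 2 * m) * W := by
    have h1 : ‖((ξ, θ) : Xi × ℝ) - (ξ', θ')‖ ≤ 2 * (W + M) := by
      rw [Prod.mk_sub_mk, Prod.norm_mk]
      refine max_le ?_ ?_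
      · refine (norm_sub_le _ _).trans ?_
        linarith [hmem.1]
      · rw [Real.norm_eq_abs, abs_le]
        constructor <;> linarith [hmem.2.2]
    have h2 : M ≤ M * W := le_mul_of_one_le_right hM.le hW1
    rw [hm]; linarith
  -- everything is bounded by `S * W`
  have hfin : ∀ s, s ≤ S → s * W ≤ (C + S * C) * I0 ψ ξ θ ξ' θ' := by
    intro s hs
    calc s * W ≤ S * W := by gcongr
      _ ≤ S * (C * I0 ψ ξ θ ξ' θ') := by gcongr
      _ ≤ _ := by nlinarith [mul_nonneg hC hI]
  have hpos1 : 0 ≤ (Ce + X) * (1 + 2 * m) := by positivity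
  have hpos2 : 0 ≤ (81 * m + 729 * m ^ 2) * (C + Y) := by positivity
  have hpos3 : 0 ≤ (81 * m + 729 * m ^ 2) ^ 2 := by positivity
  have hpos4 : 0 ≤ 729 * m ^ 2 * (C + Y) := by positivity
  have hpos5 : 0 ≤ 81 * m * (C + Y) := by positivity
  have hdxW : ∀ B, |dXi B ψ ξ θ| ≤ C * W := by
    rintro (⟨i, α⟩ | ⟨i, α⟩ | u)
    · exact hdF i α
    · exact (hdZ i α).trans (by gcongr)
    · exact (hdW u).trans (by gcongr)
  have hbar : ∀ B, |dXi B ψ ξ' θ'| ≤ Y := fun B => (hL B _ _ hK').trans (hsl B)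
  have hcof : ∀ b c i α, |dPhi (.inr (.inl (b, c))) i α ξ.1 - dPhi (.inr (.inl (b, c))) i α ξ'.1|
      ≤ 81 * m * a := fun b c i α =>
    (dPhi_cof_diff b c i α ξ.1 ξ'.1).trans (by linarith)
  have hdet : ∀ u i α, |dPhi (.inr (.inr u)) i α ξ.1 - dPhi (.inr (.inr u)) i α ξ'.1|
      ≤ 729 * m ^ 2 * a ^ 2 := fun u i α => by
    refine (dPhi_det_diff i α ξ.1 ξ'.1 u).trans ?_
    have := mul_le_mul hFd hFF (by positivity) (by positivity)
    nlinarith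
  refine ⟨?_, fun B => ?_, ?_, ?_⟩
  · refine (hCe ξ θ ξ' θ' hK').trans ?_
    have h1 : Ce * (1 + ‖((ξ, θ) : Xi × ℝ) - (ξ', θ')‖) ≤ S * W := by
      calc _ ≤ Ce * ((1 + 2 * m) * W) := by gcongr
        _ = Ce * (1 + 2 * m) * W := by ring
        _ ≤ S * W := by
          gcongr
          have : 0 ≤ X * (1 + 2 * m) := by positivity
          rw [hSdef]; linarith
    have h2 : S * W ≤ S * (C * I0 ψ ξ θ ξ' θ') := by gcongr
    linarith
  · refine (hCx B ξ θ ξ' θ' hK').trans ?_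
    have h1 : Cx B * (1 + ‖((ξ, θ) : Xi × ℝ) - (ξ', θ')‖) ≤ X * (1 + 2 * m) * W := by
      calc _ ≤ X * ((1 + 2 * m) * W) := by gcongr; exact hsx B
        _ = _ := by ring
    have h2 := hfin (C + X * (1 + 2 * m)) (by
      have : 0 ≤ Ce * (1 + 2 * m) := by positivity
      rw [hSdef]; linarith)
    linarith [hdxW B]
  · rintro (⟨b, c⟩ | ⟨b, c⟩ | u) i α
    · rw [dPhi_F, dPhi_F, sub_self, zero_mul, abs_zero]
      have := hfin 0 hS0
      linarith
    · rw [abs_mul]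
      have hx : |dXi (.inr (.inl (b, c))) ψ ξ θ - dXi (.inr (.inl (b, c))) ψ ξ' θ'|
          ≤ (C + Y) * a ^ (p - 1) := by
        refine (abs_sub _ _).trans ?_
        have : Y ≤ Y * a ^ (p - 1) := le_mul_of_one_le_right hl0 haz1
        linarith [hdZ b c, hbar (.inr (.inl (b, c)))]
      calc _ ≤ (81 * m * a) * ((C + Y) * a ^ (p - 1)) :=
            mul_le_mul (hcof b c i α) hx (abs_nonneg _) (by positivity)
        _ = 81 * m * (C + Y) * (a * a ^ (p - 1)) := by ring
        _ = 81 * m * (C + Y) * W := by rw [haz]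
        _ ≤ _ := hfin _ (by rw [hSdef]; linarith)
    · rw [abs_mul]
      have hx : |dXi (.inr (.inr u)) ψ ξ θ - dXi (.inr (.inr u)) ψ ξ' θ'|
          ≤ (C + Y) * a ^ (p - 2) := by
        refine (abs_sub _ _).trans ?_
        have : Y ≤ Y * a ^ (p - 2) := le_mul_of_one_le_right hl0 haw1
        linarith [hdW u, hbar (.inr (.inr u))]
      calc _ ≤ (729 * m ^ 2 * a ^ 2) * ((C + Y) * a ^ (p - 2)) :=
            mul_le_mul (hdet u i α) hx (abs_nonneg _) (by positivity)
        _ = 729 * m ^ 2 * (C + Y) * (a ^ 2 * a ^ (p - 2)) := by ring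
        _ = 729 * m ^ 2 * (C + Y) * W := by rw [haw]
        _ ≤ _ := hfin _ (by rw [hSdef]; linarith)
  · have hall : ∀ B i α, |dPhi B i α ξ.1 - dPhi B i α ξ'.1|
        ≤ (81 * m + 729 * m ^ 2) * a ^ 2 := by
      have haa : a ≤ a ^ 2 := by nlinarith
      have z1 : 0 ≤ 81 * m * a ^ 2 := by positivity
      have z2 : 0 ≤ 729 * m ^ 2 * a ^ 2 := by positivity
      have z3 : 81 * m * a ≤ 81 * m * a ^ 2 := by gcongr
      rintro (⟨b, c⟩ | ⟨b, c⟩ | u) i α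
      · rw [dPhi_F, dPhi_F, sub_self, abs_zero]; positivity
      · linarith [hcof b c i α]
      · linarith [hdet u i α]
    intro B i α
    rw [← sq_abs]
    calc _ ≤ ((81 * m + 729 * m ^ 2) * a ^ 2) ^ 2 := by gcongr; exact hall B i α
      _ = (81 * m + 729 * m ^ 2) ^ 2 * a ^ 4 := by ring
      _ ≤ (81 * m + 729 * m ^ 2) ^ 2 * W := by gcongr
      _ ≤ _ := hfin _ (by rw [hSdef]; linarith)

lemma ctrl_all {ψ : Xi → ℝ → ℝ} (hψ : ContDiffOn ℝ 3 (unc ψ) Om) (hcv : PsiConvex ψ)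
    {c p q r ℓ : ℝ} (hgrow : GrowthCond ψ c p q r ℓ)
    (hp : 4 ≤ p) (hq : 1 < q) (hr : 1 < r) (hl : 1 < ℓ) {M δ : ℝ} (hM : 0 < M) (hδ : 0 < δ) :
    ∃ C, 0 ≤ C ∧ ∀ ξ θ ξ' θ', 0 < θ → (ξ', θ') ∈ Kc M δ →
      Ctrl ψ ξ θ ξ' θ' (C * I0 ψ ξ θ ξ' θ') ∧ 0 ≤ I0 ψ ξ θ ξ' θ' := by
  by_cases hδM : δ ≤ M
  · obtain ⟨k, C, hk, hC0, hC⟩ := far hψ hcv hgrow hp hq hr hl hM hδ hδM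
    obtain ⟨C1, hC10, hC1⟩ := ctrl_near hψ hcv (hM.le.trans hk) (half_pos hδ)
    obtain ⟨C2, hC20, hC2⟩ := ctrl_far hψ hp hq hr hl hM hδ hC0
    refine ⟨C1 + C2, by positivity, fun ξ θ ξ' θ' hθ hK' => ?_⟩
    have hm := mem_Kc.1 hK'
    have hI : 0 ≤ I0 ψ ξ θ ξ' θ' := by
      have hθ' : 0 < θ' := hδ.trans_le hm.2.1
      have a := brA_nonneg hψ hcv ξ' (ξ - ξ') hθ'
      have b := brB_nonneg hψ hcv ξ hθ hθ'
      rw [add_sub_cancel] at a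
      rw [I0_split]; linarith
    refine ⟨?_, hI⟩
    rcases hC ξ θ ξ' θ' hθ hK' with h | h
    · refine (hC1 ξ θ ξ' θ' h (mem_Kc.2 ⟨hm.1.trans hk, by linarith, hm.2.2.trans hk⟩)).mono ?_
      gcongr; linarith
    · refine (hC2 ξ θ ξ' θ' hθ hK' h).mono ?_
      gcongr; linarith
  · refine ⟨0, le_rfl, fun ξ θ ξ' θ' _ hK' => ?_⟩
    have := mem_Kc.1 hK'
    exact absurd (this.2.1.trans this.2.2) hδM

/-- Appendix Lemma A.2(2),(4), upper bounds by the relative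
entropy. -/
theorem upper_bounds_by_relative_entropy
    (ψ : Xi → ℝ → ℝ) (c p q r ℓ : ℝ)
    (hψ3 : PsiC3 ψ) (hconv : PsiConvex ψ)
    (hgrow : GrowthCond ψ c p q r ℓ)
    (hp : 4 ≤ p) (hq : 1 < q) (hr : 1 < r) (hl : 1 < ℓ)
    (M δ : ℝ) (hM : 0 < M) (hδ : 0 < δ) :
    ∃ C₀ C₁ C₂ C₃ : ℝ, 0 < C₀ ∧ 0 < C₁ ∧ 0 < C₂ ∧ 0 < C₃ ∧
      ∀ (ξ : Xi) (v : Vec3) (θ : ℝ), 0 < θ → ∀ U' ∈ Gamma M δ,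
        (|etaRel ψ ξ θ U'.1 U'.2.2|
          ≤ C₀ * relEnt ψ ξ v θ U'.1 U'.2.1 U'.2.2) ∧
        (∀ i α : Fin 3,
          |∑ B : Idx, (dPhi B i α ξ.1 - dPhi B i α U'.1.1)
              * (dXi B ψ ξ θ - dXi B ψ U'.1 U'.2.2)|
            ≤ C₁ * relEnt ψ ξ v θ U'.1 U'.2.1 U'.2.2) ∧
        (Real.sqrt (∑ B : Idx, (dXiRel B ψ ξ θ U'.1 U'.2.2)^2)
          ≤ C₂ * relEnt ψ ξ v θ U'.1 U'.2.1 U'.2.2) ∧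
        (∀ α : Fin 3,
          |∑ B : Idx, ∑ i, (dPhi B i α ξ.1 - dPhi B i α U'.1.1)
              * (v i - U'.2.1 i)|
            ≤ C₃ * relEnt ψ ξ v θ U'.1 U'.2.1 U'.2.2) := by
  obtain ⟨C, hC0, hC⟩ := ctrl_all (ψ := ψ) hψ3 hconv hgrow hp hq hr hl hM hδ
  set n : ℝ := (Fintype.card Idx : ℝ) with hn
  have hn0 : 0 ≤ n := Nat.cast_nonneg _
  refine ⟨C + 1, n * C + 1, n * C + 1, n * (3 * C + 1) + 1, by positivity, by positivity,
    by positivity, by positivity, ?_⟩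
  rintro ξ v θ hθ ⟨ξ', v', θ'⟩ ⟨g1, g2, g3, g4, g5, g6⟩
  simp only at g1 g2 g3 g4 g5 g6 ⊢
  have hK : (ξ', θ') ∈ Kc M δ := by
    refine mem_Kc.2 ⟨?_, g5, g6⟩
    rw [Prod.norm_def, Prod.norm_def]
    exact max_le ((norm_le_mnorm _).trans g1) (max_le ((norm_le_mnorm _).trans g2) g3)
  obtain ⟨⟨h1, h2, h3, h4⟩, hI⟩ := hC ξ θ ξ' θ' hθ hK
  set V := ∑ i, (v i - v' i) ^ 2 with hV
  have hV0 : 0 ≤ V := Finset.sum_nonneg fun i _ => sq_nonneg _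
  have hrel : relEnt ψ ξ v θ ξ' v' θ' = I0 ψ ξ θ ξ' θ' + (1/2) * V := by
    simp only [relEnt, I0]; ring
  rw [hrel]
  set I := I0 ψ ξ θ ξ' θ' with hIdef
  have hCI : 0 ≤ C * I := mul_nonneg hC0 hI
  have hCV : 0 ≤ C * V := mul_nonneg hC0 hV0
  have hnCV : 0 ≤ n * (C * V) := by positivity
  have hnCI : 0 ≤ n * (C * I) := by positivity
  have hsum : ∀ (f : Idx → ℝ) (T : ℝ), (∀ B, |f B| ≤ T) → |∑ B, f B| ≤ n * T := by
    intro f T hf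
    refine (Finset.abs_sum_le_sum_abs _ _).trans ?_
    refine (Finset.sum_le_sum fun B _ => hf B).trans ?_
    rw [Finset.sum_const, nsmul_eq_mul, Finset.card_univ]
  refine ⟨?_, fun i α => ?_, ?_, fun α => ?_⟩
  · have : etaRel ψ ξ θ ξ' θ' = relQ (etaHat ψ) ξ θ ξ' θ' := rfl
    rw [this]
    linarith
  · have := hsum _ _ (fun B => h3 B i α)
    linarith
  · have e : ∀ B, dXiRel B ψ ξ θ ξ' θ' = relQ (dXi B ψ) ξ θ ξ' θ' := fun _ => rfl
    simp only [e]
    have key : Real.sqrt (∑ B : Idx, (relQ (dXi B ψ) ξ θ ξ' θ') ^ 2)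
        ≤ ∑ B : Idx, |relQ (dXi B ψ) ξ θ ξ' θ'| := by
      refine Real.sqrt_le_iff.2 ⟨Finset.sum_nonneg fun B _ => abs_nonneg _, ?_⟩
      have := Finset.sum_sq_le_sq_sum_of_nonneg (s := Finset.univ)
        (f := fun B : Idx => |relQ (dXi B ψ) ξ θ ξ' θ'|) (fun B _ => abs_nonneg _)
      simpa only [sq_abs] using this
    have k2 := hsum (fun B => |relQ (dXi B ψ) ξ θ ξ' θ'|) (C * I)
      (fun B => by rw [abs_abs]; exact h2 B)
    have k3 := le_of_abs_le k2
    linarith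
  · have hB : ∀ B : Idx, |∑ i, (dPhi B i α ξ.1 - dPhi B i α ξ'.1) * (v i - v' i)|
        ≤ 3 * C * I + (1/2) * V := by
      intro B
      refine (Finset.abs_sum_le_sum_abs _ _).trans ?_
      have hi : ∀ i : Fin 3, |(dPhi B i α ξ.1 - dPhi B i α ξ'.1) * (v i - v' i)|
          ≤ C * I + (1/2) * (v i - v' i) ^ 2 := by
        intro i
        have a1 := h4 B i α
        rw [abs_le]
        constructor
        · nlinarith [sq_nonneg ((dPhi B i α ξ.1 - dPhi B i α ξ'.1) + (v i - v' i))]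
        · nlinarith [sq_nonneg ((dPhi B i α ξ.1 - dPhi B i α ξ'.1) - (v i - v' i))]
      refine (Finset.sum_le_sum fun i _ => hi i).trans (le_of_eq ?_)
      rw [Finset.sum_add_distrib, ← Finset.mul_sum, ← Finset.mul_sum, ← hV, Finset.sum_const, Finset.card_univ,
        Fintype.card_fin, nsmul_eq_mul]
      push_cast
      ring
    have := hsum _ _ hB
    nlinarith [mul_nonneg hn0 hI, mul_nonneg hn0 hV0]

end
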